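/- arXiv:0904.1691 — 2 statements merged into one kernel-verified Lean document; each statement's English description precedes it below -/
import Mathlib

section
/- Let 1 ≤ p ≤ 2 and 1 ≤ r, s ≤ ∞. There exists a constant C > 0 such that for every Schwartz function a on ℝ^{2d} and every Schwartz function f on ℝ^d one has ‖a(x,D)f‖_{W(L^r,L^s)} ≤ C · ‖a‖_{M^{p,1}} · ‖f‖_{W(L^r,L^s)}. -/
open MeasureTheory SchwartzMap Complex ENNReal NNReal

noncomputable section

/-- Mixed `L^p`-type norm of an `ℝ≥0∞`-valued function, with the usual
`essSup` modification when `p = ∞`. -/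
def lqNorm {α : Type*} [MeasurableSpace α] (μ : Measure α) (p : ℝ≥0∞)
    (f : α → ℝ≥0∞) : ℝ≥0∞ :=
  if p = ∞ then essSup f μ else (∫⁻ a, f a ^ p.toReal ∂μ) ^ (1 / p.toReal)

/-- Conjugate exponent in `ℝ≥0∞` : `1/p + 1/p' = 1`, with `1' = ∞`, `∞' = 1`. -/
def dualExp (p : ℝ≥0∞) : ℝ≥0∞ :=
  if p = 1 then ∞ else if p = ∞ then 1 else ENNReal.ofReal (p.toReal / (p.toReal - 1))

/-- `1/p` as a real number, with the convention `1/∞ = 0`. -/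
def invR (p : ℝ≥0∞) : ℝ := (p⁻¹).toReal

/-- The Gaussian window `G(t) = exp(-π |t|²)` (as a complex-valued function). -/
def gaussWin {ι : Type*} [Fintype ι] (t : EuclideanSpace ℝ ι) : ℂ :=
  Complex.exp (-(Real.pi * ‖t‖ ^ 2))

/-- Short-time Fourier transform with Gaussian window:
`V_G F (x, ω) = ∫ F t * conj (G (t - x)) * exp (-2πi ω⬝t) dt`. -/
def STFT {ι : Type*} [Fintype ι] (F : EuclideanSpace ℝ ι → ℂ)
    (x ω : EuclideanSpace ℝ ι) : ℂ :=
  ∫ t, F t * (starRingEnd ℂ) (gaussWin (t - x)) *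
    Complex.exp (Complex.I * (-(2 * Real.pi * (inner ℝ ω t : ℝ))))

/-- Modulation space norm `M^{p,q}`. -/
def modNorm {ι : Type*} [Fintype ι] (p q : ℝ≥0∞)
    (F : EuclideanSpace ℝ ι → ℂ) : ℝ≥0∞ :=
  lqNorm volume q fun ω => lqNorm volume p fun x => (‖STFT F x ω‖₊ : ℝ≥0∞)

/-- Wiener amalgam norm `W(𝓕 L^p, L^q)` (local component Fourier–Lebesgue). -/
def wFLNorm {ι : Type*} [Fintype ι] (p q : ℝ≥0∞)
    (F : EuclideanSpace ℝ ι → ℂ) : ℝ≥0∞ :=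
  lqNorm volume q fun x => lqNorm volume p fun ω => (‖STFT F x ω‖₊ : ℝ≥0∞)

/-- The unit cube `[0,1)^d`. -/
def unitCube (d : ℕ) : Set (EuclideanSpace ℝ (Fin d)) :=
  {x | ∀ i, x i ∈ Set.Ico (0 : ℝ) 1}

/-- Wiener amalgam norm
`‖f‖_{W(L^r,L^s)} = ( Σ_{n ∈ ℤ^d} ( ∫_{[0,1)^d} |f(x+n)|^r dx )^{s/r} )^{1/s}`. -/
def wNorm (d : ℕ) (r s : ℝ≥0∞) (f : EuclideanSpace ℝ (Fin d) → ℂ) : ℝ≥0∞ :=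
  lqNorm (Measure.count : Measure (Fin d → ℤ)) s fun n =>
    lqNorm (volume.restrict (unitCube d)) r fun x =>
      (‖f (x + show EuclideanSpace ℝ (Fin d) from WithLp.toLp 2 fun i => (n i : ℝ))‖₊ : ℝ≥0∞)

/-- Pairing `(x, ω) ∈ ℝ^d × ℝ^d ↦ ℝ^{2d}`. -/
def pairE {d : ℕ} (x ω : EuclideanSpace ℝ (Fin d)) :
    EuclideanSpace ℝ (Fin d ⊕ Fin d) :=
  WithLp.toLp 2 fun i => Sum.elim (fun j => x j) (fun j => ω j) i

/-- First (space) component of a point of `ℝ^{2d}`. -/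
def xpart {d : ℕ} (z : EuclideanSpace ℝ (Fin d ⊕ Fin d)) :
    EuclideanSpace ℝ (Fin d) := WithLp.toLp 2 fun i => z (Sum.inl i)

/-- Second (frequency) component of a point of `ℝ^{2d}`. -/
def wpart {d : ℕ} (z : EuclideanSpace ℝ (Fin d ⊕ Fin d)) :
    EuclideanSpace ℝ (Fin d) := WithLp.toLp 2 fun i => z (Sum.inr i)

/-- Fourier transform `f̂(ω) = ∫ f t e^{-2πi t⬝ω} dt`. -/
def fTrans {ι : Type*} [Fintype ι] (f : EuclideanSpace ℝ ι → ℂ)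
    (ω : EuclideanSpace ℝ ι) : ℂ :=
  ∫ t, f t * Complex.exp (Complex.I * (-(2 * Real.pi * (inner ℝ t ω : ℝ))))

/-- Kohn–Nirenberg operator `a(x,D) f (x) = ∫ a(x,ω) f̂(ω) e^{2πi x⬝ω} dω`. -/
def KNop {d : ℕ} (a : EuclideanSpace ℝ (Fin d ⊕ Fin d) → ℂ)
    (f : EuclideanSpace ℝ (Fin d) → ℂ) (x : EuclideanSpace ℝ (Fin d)) : ℂ :=
  ∫ ω, a (pairE x ω) * fTrans f ω *
    Complex.exp (Complex.I * (2 * Real.pi * (inner ℝ x ω : ℝ)))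

/-- Weyl operator `L_σ f (x) = ∫∫ e^{2πi (x-y)⬝ω} σ((x+y)/2, ω) f(y) dy dω`. -/
def weylOp {d : ℕ} (σ : EuclideanSpace ℝ (Fin d ⊕ Fin d) → ℂ)
    (f : EuclideanSpace ℝ (Fin d) → ℂ) (x : EuclideanSpace ℝ (Fin d)) : ℂ :=
  ∫ y, ∫ ω, Complex.exp (Complex.I * (2 * Real.pi * (inner ℝ (x - y) ω : ℝ))) *
    σ (pairE ((2 : ℝ)⁻¹ • (x + y)) ω) * f y

/-- Cross-Wigner distribution
`W(g,f)(x,ω) = ∫ g(x+t/2) conj(f(x−t/2)) e^{−2πi ω⬝t} dt`. -/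
def wigner {d : ℕ} (g f : EuclideanSpace ℝ (Fin d) → ℂ)
    (z : EuclideanSpace ℝ (Fin d ⊕ Fin d)) : ℂ :=
  ∫ t, g (xpart z + (2 : ℝ)⁻¹ • t) * (starRingEnd ℂ) (f (xpart z - (2 : ℝ)⁻¹ • t)) *
    Complex.exp (Complex.I * (-(2 * Real.pi * (inner ℝ (wpart z) t : ℝ))))

end

/-!
Taking the Fourier transform `k(x, ·)` of `a(x, ·)` gives `a(x,D)f(x) = ∫ k(x,z) f(x+z) dz`, and it
suffices to find `H` with `|k(x,z)| ≤ H(z)` and `‖H‖₁ ≤ C ‖a‖_{M^{p,1}}`: a translation changes the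
norm of `W(L^r,L^s)` at most by the factor `2^d`, because a translated unit cube meets at most `2^d`
lattice cubes, so Minkowski's inequality bounds the operator by `2^d ‖H‖₁`.

Fourier inversion and the reproducing formula for `V_G` give `‖F‖_∞ ≤ C ‖F‖_{M^{2,1}}`, so
`H(z) = C ‖k(·,z)‖_{M^{2,1}}` is admissible. By the Cauchy–Schwarz inequality against the Gaussian
and Plancherel's theorem in the frequency variable, `‖H‖₁ ≤ C ‖a‖_{M^{2,1}}`. The reproducing
formula also gives `M^{p,1} ⊆ M^{2,1}` for `p ≤ 2`.
-/

open scoped FourierTransform RealInnerProductSpace Convolution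

section MixedNorms

variable {α β : Type*} [MeasurableSpace α] [MeasurableSpace β] {μ : Measure α} {ν : Measure β}
  {p q : ℝ≥0∞}

theorem lqNorm_eq_eLpNorm (hp : p ≠ 0) (f : α → ℝ≥0∞) : lqNorm μ p f = eLpNorm f p μ := by
  by_cases hp_top : p = ∞
  · simp [lqNorm, hp_top, eLpNormEssSup]
  · simp [lqNorm, hp_top, eLpNorm_eq_lintegral_rpow_enorm_toReal hp hp_top]

theorem eLpNorm_rpow_toReal (hp : p ≠ 0) (hp_top : p ≠ ∞) (f : α → ℝ≥0∞) :
    eLpNorm f p μ ^ p.toReal = ∫⁻ x, f x ^ p.toReal ∂μ := by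
  simp only [eLpNorm_eq_lintegral_rpow_enorm_toReal hp hp_top, enorm_eq_self, one_div]
  exact ENNReal.rpow_inv_rpow (ENNReal.toReal_pos hp hp_top).ne' _

theorem eLpNorm_const_mul (c : ℝ≥0∞) {f : α → ℝ≥0∞} (hf : Measurable f) :
    eLpNorm (fun x => c * f x) p μ = c * eLpNorm f p μ := by
  rcases eq_or_ne p 0 with rfl | hp
  · simp
  rcases eq_or_ne p ∞ with rfl | hp_top
  · simpa [eLpNormEssSup] using ENNReal.essSup_const_mul
  have hp_pos := ENNReal.toReal_pos hp hp_top
  simp only [eLpNorm_eq_lintegral_rpow_enorm_toReal hp hp_top, enorm_eq_self, one_div,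
    ENNReal.mul_rpow_of_nonneg _ _ hp_pos.le]
  rw [lintegral_const_mul _ (hf.pow_const _),
    ENNReal.mul_rpow_of_nonneg _ _ (inv_nonneg.2 hp_pos.le), ENNReal.rpow_rpow_inv hp_pos.ne']

theorem eLpNorm_le_eLpNorm_top_add_eLpNorm {E : Type*} [ENorm E] {f : α → E} (hp : p ≠ 0)
    (hpq : p ≤ q) : eLpNorm f q μ ≤ eLpNorm f ∞ μ + eLpNorm f p μ := by
  rcases eq_or_ne q ∞ with rfl | hq_top
  · exact le_self_add
  have hp_top : p ≠ ∞ := ne_top_of_le_ne_top hq_top hpq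
  have hq : q ≠ 0 := (hp.bot_lt.trans_le hpq).ne'
  have hp_pos : 0 < p.toReal := ENNReal.toReal_pos hp hp_top
  have hq_pos : 0 < q.toReal := ENNReal.toReal_pos hq hq_top
  have hpq' : 0 ≤ q.toReal - p.toReal := sub_nonneg.2 (ENNReal.toReal_mono hq_top hpq)
  set M := eLpNorm f ∞ μ + eLpNorm f p μ with hM
  by_cases hM_top : M = ∞
  · simp [hM_top]
  have integral_le : ∫⁻ x, ‖f x‖ₑ ^ p.toReal ∂μ ≤ M ^ p.toReal := by
    have h := eLpNorm_rpow_toReal (μ := μ) hp hp_top fun x => ‖f x‖ₑ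
    simp only [eLpNorm_enorm] at h
    rw [← h]
    gcongr
    exact le_add_self
  rw [eLpNorm_eq_lintegral_rpow_enorm_toReal hq hq_top, one_div, ENNReal.rpow_inv_le_iff hq_pos]
  calc ∫⁻ x, ‖f x‖ₑ ^ q.toReal ∂μ
      ≤ ∫⁻ x, M ^ (q.toReal - p.toReal) * ‖f x‖ₑ ^ p.toReal ∂μ := by
        refine lintegral_mono_ae ?_
        filter_upwards [enorm_ae_le_eLpNormEssSup f μ] with x hx
        calc ‖f x‖ₑ ^ q.toReal = ‖f x‖ₑ ^ (q.toReal - p.toReal) * ‖f x‖ₑ ^ p.toReal := by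
              rw [← ENNReal.rpow_add_of_nonneg _ _ hpq' hp_pos.le, sub_add_cancel]
          _ ≤ _ := by
              gcongr
              exact hx.trans (by simp [hM])
    _ ≤ M ^ (q.toReal - p.toReal) * M ^ p.toReal := by
        rw [lintegral_const_mul' _ _ (ENNReal.rpow_ne_top_of_nonneg hpq' hM_top)]
        gcongr
    _ = M ^ q.toReal := by
        rw [← ENNReal.rpow_add_of_nonneg _ _ hpq' hp_pos.le, sub_add_cancel]

theorem lintegral_mul_le_eLpNorm_top_mul {f g : α → ℝ≥0∞} (hg : AEMeasurable g μ) :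
    ∫⁻ x, f x * g x ∂μ ≤ eLpNorm f ∞ μ * eLpNorm g 1 μ := by
  rw [eLpNorm_one_eq_lintegral_enorm]
  simp only [enorm_eq_self]
  rw [← lintegral_const_mul'' _ hg]
  refine lintegral_mono_ae ?_
  filter_upwards [enorm_ae_le_eLpNormEssSup f μ] with x hx
  gcongr
  simpa using hx

theorem lintegral_mul_le_eLpNorm_mul_eLpNorm [ENNReal.HolderConjugate p q] {f g : α → ℝ≥0∞}
    (hf : AEMeasurable f μ) (hg : AEMeasurable g μ) :
    ∫⁻ x, f x * g x ∂μ ≤ eLpNorm f p μ * eLpNorm g q μ := by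
  rcases eq_or_ne p ∞ with rfl | hp_top
  · obtain rfl : q = 1 := ENNReal.HolderConjugate.unique ∞ q 1
    exact lintegral_mul_le_eLpNorm_top_mul hg
  rcases eq_or_ne q ∞ with rfl | hq_top
  · obtain rfl : p = 1 := ENNReal.HolderConjugate.unique ∞ p 1
    simpa only [mul_comm] using lintegral_mul_le_eLpNorm_top_mul hf (f := g)
  have hconj := ENNReal.HolderConjugate.toReal_of_ne_top hp_top hq_top
  simpa [eLpNorm_eq_lintegral_rpow_enorm_toReal, hp_top, hq_top,
    ENNReal.HolderConjugate.ne_zero p q, ENNReal.HolderConjugate.ne_zero q p] using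
    ENNReal.lintegral_mul_le_Lp_mul_Lq μ hconj hf hg

theorem lintegral_mul_rpow_le {f g : α → ℝ≥0∞} (hf : AEMeasurable f μ) (hg : AEMeasurable g μ)
    {t : ℝ} (ht : 1 ≤ t) :
    (∫⁻ x, f x * g x ∂μ) ^ t ≤ (∫⁻ x, g x ∂μ) ^ (t - 1) * ∫⁻ x, f x ^ t * g x ∂μ := by
  have ht_pos : 0 < t := zero_lt_one.trans_le ht
  have hconj : 0 ≤ 1 - t⁻¹ := sub_nonneg.2 (inv_le_one_of_one_le₀ ht)
  have hsplit (x : α) : f x * g x = g x ^ (1 - t⁻¹) * (f x ^ t * g x) ^ t⁻¹ := by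
    rw [ENNReal.mul_rpow_of_nonneg _ _ (inv_nonneg.2 ht_pos.le), ENNReal.rpow_rpow_inv ht_pos.ne',
      mul_left_comm, ← ENNReal.rpow_add_of_nonneg _ _ hconj (inv_nonneg.2 ht_pos.le),
      sub_add_cancel, ENNReal.rpow_one]
  calc (∫⁻ x, f x * g x ∂μ) ^ t
      ≤ ((∫⁻ x, g x ∂μ) ^ (1 - t⁻¹) * (∫⁻ x, f x ^ t * g x ∂μ) ^ t⁻¹) ^ t := by
        simp only [hsplit]
        gcongr
        exact ENNReal.lintegral_mul_norm_pow_le hg ((hf.pow_const t).mul hg) hconj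
          (inv_nonneg.2 ht_pos.le) (sub_add_cancel _ _)
    _ = _ := by
        rw [ENNReal.mul_rpow_of_nonneg _ _ ht_pos.le, ENNReal.rpow_inv_rpow ht_pos.ne',
          ← ENNReal.rpow_mul, sub_mul, inv_mul_cancel₀ ht_pos.ne', one_mul]

theorem lintegral_div_eLpNorm_rpow_mul_le (hp : p ≠ 0) (hp_top : p ≠ ∞) {f : α → ℝ≥0∞}
    (hf : Measurable f) :
    ∫⁻ x, (f x / eLpNorm f p μ) ^ p.toReal * eLpNorm f p μ ∂μ ≤ eLpNorm f p μ := by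
  have hp_pos := ENNReal.toReal_pos hp hp_top
  simp only [ENNReal.div_rpow_of_nonneg _ _ hp_pos.le]
  simp only [div_eq_mul_inv]
  rw [lintegral_mul_const _ ((hf.pow_const _).mul_const _), lintegral_mul_const _ (hf.pow_const _),
    ← eLpNorm_rpow_toReal hp hp_top]
  exact mul_le_of_le_one_left' (ENNReal.mul_inv_le_one _)

variable {K : α → β → ℝ≥0∞}

theorem eLpNorm_uncurry [SFinite ν] (hp : p ≠ 0) (hp_top : p ≠ ∞)
    (hK : Measurable (Function.uncurry K)) :
    eLpNorm (Function.uncurry K) p (μ.prod ν) = eLpNorm (fun a => eLpNorm (K a) p ν) p μ := by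
  refine ENNReal.rpow_left_injective (ENNReal.toReal_pos hp hp_top).ne' ?_
  simp only [eLpNorm_rpow_toReal hp hp_top]
  exact lintegral_prod _ (hK.pow_const _).aemeasurable

theorem measurable_eLpNorm_left [SFinite μ] (hK : Measurable (Function.uncurry K)) (p : ℝ≥0∞) :
    Measurable fun y => eLpNorm (fun x => K x y) p μ := by
  have hK' : Measurable fun z : β × α => K z.2 z.1 := hK.comp measurable_swap
  rcases eq_or_ne p 0 with rfl | hp
  · simp
  rcases eq_or_ne p ∞ with rfl | hp_top
  · refine measurable_of_Ioi fun c => ?_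
    have hset : (fun y => eLpNorm (fun x => K x y) ∞ μ) ⁻¹' Set.Ioi c =
        {y | μ (Prod.mk y ⁻¹' {z : β × α | c < K z.2 z.1}) ≠ 0} := by
      ext y
      have hle : eLpNorm (fun x => K x y) ∞ μ ≤ c ↔ ∀ᵐ x ∂μ, K x y ≤ c :=
        ⟨fun h => (enorm_ae_le_eLpNormEssSup (fun x => K x y) μ).mono fun x hx => hx.trans h,
          fun h => essSup_le_of_ae_le c h⟩
      simpa [ae_iff] using hle.not
    rw [hset]
    exact measurable_measure_prodMk_left (hK' measurableSet_Ioi) (measurableSet_singleton 0).compl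
  · simp only [eLpNorm_eq_lintegral_rpow_enorm_toReal hp hp_top, enorm_eq_self]
    exact (hK'.pow_const _).lintegral_prod_right'.pow_const _

variable [SFinite μ] [SFinite ν]

theorem eLpNorm_eLpNorm_comm (hp : p ≠ 0) (hp_top : p ≠ ∞)
    (hK : Measurable (Function.uncurry K)) :
    eLpNorm (fun a => eLpNorm (K a) p ν) p μ =
      eLpNorm (fun b => eLpNorm (fun a => K a b) p μ) p ν := by
  refine ENNReal.rpow_left_injective (ENNReal.toReal_pos hp hp_top).ne' ?_
  simp only [eLpNorm_rpow_toReal hp hp_top]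
  exact lintegral_lintegral_swap (hK.pow_const _).aemeasurable

theorem ae_ae_le_eLpNorm_top (hK : Measurable (Function.uncurry K)) :
    ∀ᵐ x ∂μ, ∀ᵐ y ∂ν, K x y ≤ eLpNorm (fun x' => K x' y) ∞ μ := by
  have hmeas : MeasurableSet {z : α × β | K z.1 z.2 ≤ eLpNorm (fun x => K x z.2) ∞ μ} :=
    measurableSet_le hK ((measurable_eLpNorm_left hK ∞).comp measurable_snd)
  refine (Measure.ae_ae_comm hmeas).2 (.of_forall fun y => ?_)
  simpa using enorm_ae_le_eLpNormEssSup (fun x => K x y) μ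

theorem ae_ae_eq_zero_of_eLpNorm_eq_zero (hK : Measurable (Function.uncurry K)) (hp : p ≠ 0) :
    ∀ᵐ x ∂μ, ∀ᵐ y ∂ν, eLpNorm (fun x' => K x' y) p μ = 0 → K x y = 0 := by
  have hnorm : Measurable fun z : α × β => eLpNorm (fun x => K x z.2) p μ :=
    (measurable_eLpNorm_left hK p).comp measurable_snd
  have hmeas : MeasurableSet
      {z : α × β | eLpNorm (fun x => K x z.2) p μ = 0 → K z.1 z.2 = 0} :=
    (hnorm (measurableSet_singleton 0)).imp (hK (measurableSet_singleton 0))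
  refine (Measure.ae_ae_comm hmeas).2 (.of_forall fun y => ?_)
  by_cases hy : eLpNorm (fun x => K x y) p μ = 0
  · have hKy := (eLpNorm_eq_zero_iff hK.of_uncurry_right.aestronglyMeasurable hp).1 hy
    filter_upwards [hKy] with x hx _ using hx
  · exact .of_forall fun x h => absurd h hy

/- Jensen with the weight `w y = ‖K(·,y)‖_p`, applied to `K = (K / w) * w`. -/
theorem lintegral_lintegral_rpow_le (hK : Measurable (Function.uncurry K)) (hp : 1 ≤ p)
    (hp_top : p ≠ ∞) (hfin : ∫⁻ y, eLpNorm (fun x => K x y) p μ ∂ν ≠ ∞) :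
    ∫⁻ x, (∫⁻ y, K x y ∂ν) ^ p.toReal ∂μ ≤
      (∫⁻ y, eLpNorm (fun x => K x y) p μ ∂ν) ^ p.toReal := by
  have hp0 : p ≠ 0 := (zero_lt_one.trans_le hp).ne'
  have ht : 1 ≤ p.toReal := by simpa using ENNReal.toReal_mono hp_top hp
  set w : β → ℝ≥0∞ := fun y => eLpNorm (fun x => K x y) p μ
  have hw : Measurable w := measurable_eLpNorm_left hK p
  set M := ∫⁻ y, w y ∂ν
  have hquot : Measurable fun z : α × β => (K z.1 z.2 / w z.2) ^ p.toReal * w z.2 :=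
    ((hK.div (hw.comp measurable_snd)).pow_const _).mul (hw.comp measurable_snd)
  calc ∫⁻ x, (∫⁻ y, K x y ∂ν) ^ p.toReal ∂μ
      ≤ ∫⁻ x, M ^ (p.toReal - 1) * ∫⁻ y, (K x y / w y) ^ p.toReal * w y ∂ν ∂μ := by
        refine lintegral_mono_ae ?_
        filter_upwards [ae_ae_eq_zero_of_eLpNorm_eq_zero (ν := ν) hK hp0] with x hx
        have hle : ∀ᵐ y ∂ν, K x y ≤ K x y / w y * w y := by
          filter_upwards [hx, ae_lt_top hw hfin] with y hzero hlt
          by_cases hy : w y = 0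
          · simp [hzero hy]
          · rw [ENNReal.div_mul_cancel hy hlt.ne]
        refine (ENNReal.rpow_le_rpow (lintegral_mono_ae hle) toReal_nonneg).trans ?_
        exact lintegral_mul_rpow_le (hK.of_uncurry_left.div hw).aemeasurable hw.aemeasurable ht
    _ = M ^ (p.toReal - 1) * ∫⁻ y, ∫⁻ x, (K x y / w y) ^ p.toReal * w y ∂μ ∂ν := by
        rw [lintegral_const_mul _ (hquot.lintegral_prod_right' (ν := ν)),
          lintegral_lintegral_swap hquot.aemeasurable]
    _ ≤ M ^ (p.toReal - 1) * M := by
        gcongr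
        refine lintegral_mono fun y => ?_
        exact lintegral_div_eLpNorm_rpow_mul_le hp0 hp_top hK.of_uncurry_right
    _ = M ^ p.toReal := by
        conv_rhs => rw [← sub_add_cancel p.toReal 1,
          ENNReal.rpow_add_of_nonneg _ _ (sub_nonneg.2 ht) zero_le_one, ENNReal.rpow_one]

theorem eLpNorm_lintegral_le (hK : Measurable (Function.uncurry K)) (hp : 1 ≤ p) :
    eLpNorm (fun x => ∫⁻ y, K x y ∂ν) p μ ≤ ∫⁻ y, eLpNorm (fun x => K x y) p μ ∂ν := by
  have hp0 : p ≠ 0 := (zero_lt_one.trans_le hp).ne'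
  rcases eq_or_ne p ∞ with rfl | hp_top
  · refine essSup_le_of_ae_le _ ?_
    filter_upwards [ae_ae_le_eLpNorm_top (ν := ν) hK] with x hx using lintegral_mono_ae hx
  by_cases hfin : ∫⁻ y, eLpNorm (fun x => K x y) p μ ∂ν = ∞
  · simp [hfin]
  rw [← ENNReal.rpow_le_rpow_iff (ENNReal.toReal_pos hp0 hp_top), eLpNorm_rpow_toReal hp0 hp_top]
  exact lintegral_lintegral_rpow_le hK hp hp_top hfin

end MixedNorms

section TranslatedIntegrals

variable {G β : Type*} [AddGroup G] [MeasurableSpace G] [MeasurableAdd₂ G] [MeasurableSpace β]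
  {μ : Measure G} [SFinite μ] {ν : Measure β} [SFinite ν]

theorem lintegral_lintegral_comp_add_mul [μ.IsAddLeftInvariant] {P h : G → ℝ≥0∞}
    (hP : Measurable P) (hh : Measurable h) :
    ∫⁻ ω, ∫⁻ v, P (v + ω) * h v ∂μ ∂μ = (∫⁻ v, h v ∂μ) * ∫⁻ ω, P ω ∂μ := by
  rw [lintegral_lintegral_swap (by fun_prop)]
  have hinner (v : G) : ∫⁻ ω, P (v + ω) * h v ∂μ = h v * ∫⁻ ω, P ω ∂μ := by
    rw [lintegral_mul_const _ (by fun_prop), lintegral_add_left_eq_self, mul_comm]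
  simp only [hinner]
  rw [lintegral_mul_const _ hh]

theorem lintegral_mul_lintegral_comp_add_mul_swap {K : β → G → ℝ≥0∞} {g : β → ℝ≥0∞}
    {h : G → ℝ≥0∞} (hK : Measurable (Function.uncurry K)) (hg : Measurable g) (hh : Measurable h)
    (ω : G) :
    ∫⁻ y, g y * ∫⁻ v, K y (v + ω) * h v ∂μ ∂ν = ∫⁻ v, (∫⁻ y, g y * K y (v + ω) ∂ν) * h v ∂μ := by
  have hcomp : Measurable fun z : β × G => K z.1 (z.2 + ω) :=
    hK.comp (measurable_fst.prodMk (measurable_snd.add_const ω))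
  have hleft (y : β) : Measurable fun v => K y (v + ω) := hcomp.comp measurable_prodMk_left
  have hright (v : G) : Measurable fun y => K y (v + ω) := hcomp.comp measurable_prodMk_right
  calc ∫⁻ y, g y * ∫⁻ v, K y (v + ω) * h v ∂μ ∂ν
      = ∫⁻ y, ∫⁻ v, g y * K y (v + ω) * h v ∂μ ∂ν := by
        refine lintegral_congr fun y => ?_
        simp only [mul_assoc]
        exact (lintegral_const_mul _ ((hleft y).mul hh)).symm
    _ = ∫⁻ v, ∫⁻ y, g y * K y (v + ω) * h v ∂ν ∂μ := lintegral_lintegral_swap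
        (((hg.comp measurable_fst).mul hcomp).mul (hh.comp measurable_snd)).aemeasurable
    _ = ∫⁻ v, (∫⁻ y, g y * K y (v + ω) ∂ν) * h v ∂μ :=
        lintegral_congr fun v => lintegral_mul_const _ (hg.mul (hright v))

end TranslatedIntegrals

noncomputable section Amalgam

variable {d : ℕ} {r s : ℝ≥0∞}

/-- The point of the lattice `ℤ^d ⊆ ℝ^d` with coordinates `n`. -/
def latticeVec (n : Fin d → ℤ) : EuclideanSpace ℝ (Fin d) := WithLp.toLp 2 fun i => (n i : ℝ)

/-- The half-open unit cube `n + [0,1)^d`. -/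
def latticeCube (n : Fin d → ℤ) : Set (EuclideanSpace ℝ (Fin d)) :=
  {x | x - latticeVec n ∈ unitCube d}

/-- The lattice point of the unit cube containing `z`. -/
def floorVec (z : EuclideanSpace ℝ (Fin d)) : Fin d → ℤ := fun i => ⌊z i⌋

/-- The vertex of the unit cube `[0,1]^d` with coordinates `e`. -/
def vertexVec (e : Fin d → Fin 2) : Fin d → ℤ := fun i => ((e i : ℕ) : ℤ)

/-- The local component `‖f‖_{L^r(n + [0,1)^d)}` of the Wiener amalgam norm. -/
def cubeNorm (r : ℝ≥0∞) (f : EuclideanSpace ℝ (Fin d) → ℝ≥0∞) (n : Fin d → ℤ) : ℝ≥0∞ :=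
  eLpNorm (fun x => f (x + latticeVec n)) r (volume.restrict (unitCube d))

/-- The Wiener amalgam norm `W(L^r, L^s)` of an `ℝ≥0∞`-valued function. -/
def amalgamNorm (r s : ℝ≥0∞) (f : EuclideanSpace ℝ (Fin d) → ℝ≥0∞) : ℝ≥0∞ :=
  eLpNorm (cubeNorm r f) s Measure.count

theorem wNorm_eq_amalgamNorm (hr : r ≠ 0) (hs : s ≠ 0) (f : EuclideanSpace ℝ (Fin d) → ℂ) :
    wNorm d r s f = amalgamNorm r s fun x => ‖f x‖ₑ := by
  simp only [wNorm, lqNorm_eq_eLpNorm hr, lqNorm_eq_eLpNorm hs]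
  rfl

theorem measurableSet_unitCube (d : ℕ) : MeasurableSet (unitCube d) := by
  have h : unitCube d = ⋂ i, (fun x : EuclideanSpace ℝ (Fin d) => x i) ⁻¹' Set.Ico (0 : ℝ) 1 := by
    ext x
    simp [unitCube]
  rw [h]
  exact MeasurableSet.iInter fun i => measurableSet_Ico.preimage (by fun_prop)

theorem measurableSet_latticeCube (n : Fin d → ℤ) : MeasurableSet (latticeCube n) :=
  (measurableSet_unitCube d).preimage (measurable_sub_const (latticeVec n))

theorem exists_add_mem_latticeCube {n : Fin d → ℤ} {x : EuclideanSpace ℝ (Fin d)}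
    (hx : x ∈ latticeCube n) (z : EuclideanSpace ℝ (Fin d)) :
    ∃ e : Fin d → Fin 2, x + z ∈ latticeCube (n + (floorVec z + vertexVec e)) := by
  refine ⟨fun i => if 1 ≤ x i - n i + Int.fract (z i) then 1 else 0, fun i => ?_⟩
  obtain ⟨hx_nonneg, hx_lt⟩ := hx i
  have hfract_nonneg := Int.fract_nonneg (z i)
  have hfract_lt := Int.fract_lt_one (z i)
  have hfloor := Int.floor_add_fract (z i)
  simp only [latticeVec, floorVec, vertexVec, PiLp.add_apply, PiLp.sub_apply, Pi.add_apply]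
    at hx_nonneg hx_lt ⊢
  split_ifs with hcarry <;> push_cast <;> constructor <;> simp <;> linarith

theorem cubeNorm_eq_eLpNorm_indicator {f : EuclideanSpace ℝ (Fin d) → ℝ≥0∞} (hf : Measurable f)
    (n : Fin d → ℤ) : cubeNorm r f n = eLpNorm ((latticeCube n).indicator f) r volume := by
  have hcube : unitCube d = (· + latticeVec n) ⁻¹' latticeCube n := by
    ext x
    rw [Set.mem_preimage, latticeCube, Set.mem_ofPred_eq, add_sub_cancel_right]
  have hshift : (unitCube d).indicator (fun x => f (x + latticeVec n)) =
      (latticeCube n).indicator f ∘ (· + latticeVec n) := by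
    rw [hcube]
    exact funext fun x => Set.indicator_comp_right (g := f) (· + latticeVec n)
  rw [cubeNorm, ← eLpNorm_indicator_eq_eLpNorm_restrict (measurableSet_unitCube d), hshift]
  exact eLpNorm_comp_measurePreserving
    (hf.indicator (measurableSet_latticeCube n)).aestronglyMeasurable
    (measurePreserving_add_right volume (latticeVec n))

theorem cubeNorm_comp_add_right_le (hr : 1 ≤ r) {f : EuclideanSpace ℝ (Fin d) → ℝ≥0∞}
    (hf : Measurable f) (z : EuclideanSpace ℝ (Fin d)) (n : Fin d → ℤ) :
    cubeNorm r (fun x => f (x + z)) n ≤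
      ∑ e, cubeNorm r f (n + (floorVec z + vertexVec e)) := by
  set piece : (Fin d → Fin 2) → EuclideanSpace ℝ (Fin d) → ℝ≥0∞ := fun e =>
    (latticeCube (n + (floorVec z + vertexVec e))).indicator f
  have hmeas (e : Fin d → Fin 2) : Measurable (piece e) :=
    hf.indicator (measurableSet_latticeCube _)
  have hdom (x : EuclideanSpace ℝ (Fin d)) :
      (latticeCube n).indicator (fun x => f (x + z)) x ≤ ∑ e, piece e (x + z) := by
    refine Set.indicator_apply_le' (fun hx => ?_) fun _ => zero_le
    obtain ⟨e, he⟩ := exists_add_mem_latticeCube hx z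
    calc f (x + z) = piece e (x + z) := (Set.indicator_of_mem he f).symm
      _ ≤ ∑ e, piece e (x + z) :=
        Finset.single_le_sum (f := fun e => piece e (x + z)) (fun _ _ => zero_le)
          (Finset.mem_univ e)
  calc cubeNorm r (fun x => f (x + z)) n
      = eLpNorm ((latticeCube n).indicator fun x => f (x + z)) r volume :=
        cubeNorm_eq_eLpNorm_indicator (hf.comp (measurable_add_const z)) n
    _ ≤ eLpNorm (∑ e, piece e ∘ (· + z)) r volume :=
        eLpNorm_mono_enorm fun x => by simpa using hdom x
    _ ≤ ∑ e, eLpNorm (piece e ∘ (· + z)) r volume :=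
        eLpNorm_sum_le (fun e _ =>
          ((hmeas e).comp (measurable_add_const z)).aestronglyMeasurable) hr
    _ = ∑ e, cubeNorm r f (n + (floorVec z + vertexVec e)) := by
        refine Finset.sum_congr rfl fun e _ => ?_
        rw [cubeNorm_eq_eLpNorm_indicator hf]
        exact eLpNorm_comp_measurePreserving (hmeas e).aestronglyMeasurable
          (measurePreserving_add_right volume z)

theorem amalgamNorm_comp_add_right_le (hr : 1 ≤ r) (hs : 1 ≤ s)
    {f : EuclideanSpace ℝ (Fin d) → ℝ≥0∞} (hf : Measurable f) (z : EuclideanSpace ℝ (Fin d)) :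
    amalgamNorm r s (fun x => f (x + z)) ≤ 2 ^ d * amalgamNorm r s f := by
  have hshift (m : Fin d → ℤ) :
      eLpNorm (cubeNorm r f ∘ (· + m)) s Measure.count = amalgamNorm r s f :=
    eLpNorm_comp_measurePreserving (measurable_of_countable _).aestronglyMeasurable
      (measurePreserving_add_right Measure.count m)
  calc amalgamNorm r s (fun x => f (x + z))
      ≤ eLpNorm (∑ e, cubeNorm r f ∘ (· + (floorVec z + vertexVec e))) s Measure.count :=
        eLpNorm_mono_enorm fun n => by simpa using cubeNorm_comp_add_right_le hr hf z n
    _ ≤ ∑ e, eLpNorm (cubeNorm r f ∘ (· + (floorVec z + vertexVec e))) s Measure.count :=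
        eLpNorm_sum_le (fun _ _ => (measurable_of_countable _).aestronglyMeasurable) hs
    _ = 2 ^ d * amalgamNorm r s f := by simp [hshift]

theorem amalgamNorm_mono {f g : EuclideanSpace ℝ (Fin d) → ℝ≥0∞} (h : ∀ x, f x ≤ g x) :
    amalgamNorm r s f ≤ amalgamNorm r s g :=
  eLpNorm_mono_enorm fun n => eLpNorm_mono_enorm fun x => h (x + latticeVec n)

theorem amalgamNorm_const_mul (c : ℝ≥0∞) {f : EuclideanSpace ℝ (Fin d) → ℝ≥0∞}
    (hf : Measurable f) : amalgamNorm r s (fun x => c * f x) = c * amalgamNorm r s f := by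
  have hcube : cubeNorm r (fun x => c * f x) = fun n => c * cubeNorm r f n :=
    funext fun n => eLpNorm_const_mul c (hf.comp (measurable_add_const _))
  rw [amalgamNorm, hcube, eLpNorm_const_mul c (measurable_of_countable _), amalgamNorm]

theorem amalgamNorm_lintegral_le {β : Type*} [MeasurableSpace β] {ν : Measure β} [SFinite ν]
    (hr : 1 ≤ r) (hs : 1 ≤ s) {K : EuclideanSpace ℝ (Fin d) → β → ℝ≥0∞}
    (hK : Measurable (Function.uncurry K)) :
    amalgamNorm r s (fun x => ∫⁻ y, K x y ∂ν) ≤ ∫⁻ y, amalgamNorm r s (fun x => K x y) ∂ν := by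
  have hshift (n : Fin d → ℤ) :
      Measurable (Function.uncurry fun x y => K (x + latticeVec n) y) :=
    hK.comp ((measurable_fst.add_const _).prodMk measurable_snd)
  have hcube : Measurable (Function.uncurry fun n y => cubeNorm r (fun x => K x y) n) :=
    measurable_from_prod_countable_right fun n => measurable_eLpNorm_left (hshift n) r
  calc amalgamNorm r s (fun x => ∫⁻ y, K x y ∂ν)
      ≤ eLpNorm (fun n => ∫⁻ y, cubeNorm r (fun x => K x y) n ∂ν) s Measure.count :=
        eLpNorm_mono_enorm fun n => eLpNorm_lintegral_le (hshift n) hr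
    _ ≤ ∫⁻ y, amalgamNorm r s (fun x => K x y) ∂ν := eLpNorm_lintegral_le hcube hs

theorem amalgamNorm_lintegral_mul_comp_add_le (hr : 1 ≤ r) (hs : 1 ≤ s)
    {H f : EuclideanSpace ℝ (Fin d) → ℝ≥0∞} (hH : Measurable H) (hf : Measurable f) :
    amalgamNorm r s (fun x => ∫⁻ z, H z * f (x + z)) ≤
      (∫⁻ z, H z) * (2 ^ d * amalgamNorm r s f) := by
  have hK : Measurable
      (Function.uncurry fun x z : EuclideanSpace ℝ (Fin d) => H z * f (x + z)) :=
    (hH.comp measurable_snd).mul (hf.comp measurable_add)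
  calc amalgamNorm r s (fun x => ∫⁻ z, H z * f (x + z))
      ≤ ∫⁻ z, amalgamNorm r s (fun x => H z * f (x + z)) := amalgamNorm_lintegral_le hr hs hK
    _ = ∫⁻ z, H z * amalgamNorm r s (fun x => f (x + z)) :=
        lintegral_congr fun z => amalgamNorm_const_mul _ (hf.comp (measurable_add_const z))
    _ ≤ ∫⁻ z, H z * (2 ^ d * amalgamNorm r s f) := by
        gcongr with z
        exact amalgamNorm_comp_add_right_le hr hs hf z
    _ = (∫⁻ z, H z) * (2 ^ d * amalgamNorm r s f) := lintegral_mul_const _ hH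

theorem wNorm_le_of_enorm_le_lintegral_mul_comp_add (hr : 1 ≤ r) (hs : 1 ≤ s)
    {H : EuclideanSpace ℝ (Fin d) → ℝ≥0∞} {f g : EuclideanSpace ℝ (Fin d) → ℂ}
    (hH : Measurable H) (hf : Measurable f) (h : ∀ x, ‖g x‖ₑ ≤ ∫⁻ z, H z * ‖f (x + z)‖ₑ) :
    wNorm d r s g ≤ 2 ^ d * (∫⁻ z, H z) * wNorm d r s f := by
  have hr₀ : r ≠ 0 := (one_pos.trans_le hr).ne'
  have hs₀ : s ≠ 0 := (one_pos.trans_le hs).ne'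
  rw [wNorm_eq_amalgamNorm hr₀ hs₀, wNorm_eq_amalgamNorm hr₀ hs₀, mul_comm (2 ^ d), mul_assoc]
  have hconv := amalgamNorm_lintegral_mul_comp_add_le (f := fun x => ‖f x‖ₑ) hr hs hH hf.enorm
  exact (amalgamNorm_mono h).trans hconv

end Amalgam

theorem memLp_of_integrable_of_norm_le {α E : Type*} [MeasurableSpace α] [NormedAddCommGroup E]
    {μ : Measure α} {f : α → E} {q : ℝ≥0∞} {M : ℝ} (hf : Integrable f μ) (hM : ∀ x, ‖f x‖ ≤ M)
    (hq : 1 ≤ q) : MemLp f q μ := by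
  have htop : MemLp f ∞ μ := memLp_top_of_bound hf.1 M (.of_forall hM)
  refine ⟨hf.1, (eLpNorm_le_eLpNorm_top_add_eLpNorm one_ne_zero hq).trans_lt ?_⟩
  exact ENNReal.add_lt_top.2 ⟨htop.2, (memLp_one_iff_integrable.2 hf).2⟩

section Fourier

variable {V : Type*} [NormedAddCommGroup V] [InnerProductSpace ℝ V] [MeasurableSpace V]
  [BorelSpace V] [FiniteDimensional ℝ V] {f g : V → ℂ}

theorem enorm_fourierChar_smul (x : ℝ) (z : ℂ) : ‖Real.fourierChar x • z‖ₑ = ‖z‖ₑ := by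
  rw [← ofReal_norm, Circle.norm_smul, ofReal_norm]

theorem integral_circle_smul {β : Type*} [MeasurableSpace β] {μ : Measure β} (c : Circle)
    (f : β → ℂ) : ∫ b, c • f b ∂μ = c • ∫ b, f b ∂μ := by
  simp only [Circle.smul_def, integral_smul]

theorem continuous_fourier (hf : Integrable f) : Continuous (𝓕 f) :=
  VectorFourier.fourierIntegral_continuous Real.continuous_fourierChar (L := innerₗ V)
    continuous_inner hf

theorem norm_fourier_le (f : V → ℂ) (w : V) : ‖𝓕 f w‖ ≤ ∫ t, ‖f t‖ :=
  VectorFourier.norm_fourierIntegral_le_integral_norm _ _ _ _ _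

theorem integrable_fourierChar_smul (hf : Integrable f) (w : V) :
    Integrable fun t => Real.fourierChar (-⟪t, w⟫) • f t :=
  (Real.fourierIntegral_convergent_iff w).2 hf

theorem fourier_fourierChar_smul (f : V → ℂ) (v w : V) :
    𝓕 (fun t => Real.fourierChar (-⟪t, v⟫) • f t) w = 𝓕 f (w + v) := by
  simp only [Real.fourier_eq, smul_smul, ← AddChar.map_add_eq_mul, inner_add_right, neg_add]

theorem integral_fourier_mul_eq_flip (hf : Integrable f) (hg : Integrable g) :
    ∫ w, 𝓕 f w * g w = ∫ x, f x * 𝓕 g x := by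
  simpa using! VectorFourier.integral_fourierIntegral_smul_eq_flip (L := innerₗ V)
    (μ := volume) (ν := volume) Real.continuous_fourierChar continuous_inner hf hg

theorem enorm_fourier_mul_fourier_le (hf : Integrable f) (hg : Integrable g) (w : V) :
    ‖𝓕 (fun t => f t * 𝓕 g t) w‖ₑ ≤ ∫⁻ v, ‖𝓕 f (v + w)‖ₑ * ‖g v‖ₑ := by
  have h : 𝓕 (fun t => f t * 𝓕 g t) w = ∫ v, 𝓕 f (v + w) * g v := by
    simpa only [fourier_fourierChar_smul, smul_mul_assoc, ← Real.fourier_eq] using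
      (integral_fourier_mul_eq_flip (integrable_fourierChar_smul hf w) hg).symm
  rw [h]
  simpa only [enorm_mul] using enorm_integral_le_lintegral_enorm fun v => 𝓕 f (v + w) * g v

theorem enorm_le_lintegral_enorm_fourier (hcont : Continuous f) (hf : Integrable f) (u : V) :
    ‖f u‖ₑ ≤ ∫⁻ w, ‖𝓕 f w‖ₑ := by
  by_cases htop : ∫⁻ w, ‖𝓕 f w‖ₑ = ∞
  · simp [htop]
  have hF : Integrable (𝓕 f) :=
    ⟨(continuous_fourier hf).aestronglyMeasurable, Ne.lt_top htop⟩
  rw [← congrFun (hcont.fourierInv_fourier_eq hf hF) u, Real.fourierInv_eq]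
  simpa only [enorm_fourierChar_smul] using
    enorm_integral_le_lintegral_enorm fun w => Real.fourierChar ⟪w, u⟫ • 𝓕 f w

theorem integral_sesq_fourier_eq (hf : Integrable f) (hg : Integrable g)
    (M : ℂ →L⋆[ℂ] ℂ →L[ℂ] ℂ) : ∫ w, M (𝓕 f w) (g w) = ∫ x, M (f x) (𝓕⁻ g x) := by
  simpa using!
    VectorFourier.integral_sesq_fourierIntegral_eq_neg_flip M
      (L := innerₗ V) (μ := volume) (ν := volume) Real.continuous_fourierChar continuous_inner hf hg

theorem eLpNorm_two_fourier (hcont : Continuous f) (hf : Integrable f) (hF : Integrable (𝓕 f)) :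
    eLpNorm (𝓕 f) 2 volume = eLpNorm f 2 volume := by
  have hinv : 𝓕⁻ (𝓕 f) = f := hcont.fourierInv_fourier_eq hf hF
  have hf_bound (x : V) : ‖f x‖ ≤ ∫ w, ‖𝓕 f w‖ := by
    rw [← congrFun hinv x, Real.fourierInv_eq_fourier_neg]
    exact norm_fourier_le _ _
  have hf_mem : MemLp f 2 := memLp_of_integrable_of_norm_le hf hf_bound one_le_two
  have hF_mem : MemLp (𝓕 f) 2 := memLp_of_integrable_of_norm_le hF (norm_fourier_le f) one_le_two
  have hinner : ∫ w, innerSL ℂ (𝓕 f w) (𝓕 f w) = ∫ x, innerSL ℂ (f x) (f x) := by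
    rw [integral_sesq_fourier_eq hf hF, hinv]
  simp only [innerSL_apply_apply, inner_self_eq_norm_sq_to_K] at hinner
  have hnorm : ∫ w, ‖𝓕 f w‖ ^ 2 = ∫ x, ‖f x‖ ^ 2 := by
    exact_mod_cast hinner
  simp [hF_mem.eLpNorm_eq_integral_rpow_norm, hf_mem.eLpNorm_eq_integral_rpow_norm, hnorm]

end Fourier

noncomputable section Gaussian

variable {V : Type*} [NormedAddCommGroup V] {b : ℝ}

/-- The Gaussian `t ↦ exp (-b |t|²)`. The window `gaussWin` is the case `b = π`; the width varies
because products and Fourier transforms of Gaussians are Gaussians of other widths. -/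
def gauss (b : ℝ) (t : V) : ℂ :=
  cexp (-(b * ‖t‖ ^ 2))

theorem gaussWin_eq_gauss {ι : Type*} [Fintype ι] :
    (gaussWin : EuclideanSpace ℝ ι → ℂ) = gauss Real.pi := rfl

@[fun_prop]
theorem continuous_gauss : Continuous (gauss b : V → ℂ) := by
  unfold gauss
  fun_prop

theorem gauss_eq_ofReal (b : ℝ) (t : V) : gauss b t = Real.exp (-(b * ‖t‖ ^ 2)) := by
  simp [gauss]

theorem gauss_zero (b : ℝ) : gauss b (0 : V) = 1 := by
  simp [gauss]

theorem conj_gauss (b : ℝ) (t : V) : (starRingEnd ℂ) (gauss b t) = gauss b t := by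
  rw [gauss_eq_ofReal, conj_ofReal]

theorem gauss_sub_comm (b : ℝ) (s t : V) : gauss b (s - t) = gauss b (t - s) := by
  rw [gauss, norm_sub_rev, gauss]

theorem norm_gauss_le_one (hb : 0 ≤ b) (t : V) : ‖gauss b t‖ ≤ 1 := by
  rw [gauss_eq_ofReal, norm_real, Real.norm_eq_abs, Real.abs_exp, Real.exp_le_one_iff]
  have := mul_nonneg hb (sq_nonneg ‖t‖)
  linarith

variable [InnerProductSpace ℝ V]

theorem gauss_sub_mul_gauss_sub (b : ℝ) (t x y : V) :
    gauss b (t - y) * gauss b (t - x) =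
      gauss (b / 2) (x - y) * gauss (2 * b) (t - (2⁻¹ : ℝ) • (x + y)) := by
  have hlaw := parallelogram_law_with_norm ℝ (t - y) (t - x)
  rw [show (t - y) + (t - x) = (2 : ℝ) • (t - (2⁻¹ : ℝ) • (x + y)) by module,
    show (t - y) - (t - x) = x - y by abel, norm_smul, Real.norm_two] at hlaw
  simp only [gauss_eq_ofReal, ← Complex.ofReal_mul, ← Real.exp_add]
  congr 2
  linear_combination b / 2 * hlaw

variable [MeasurableSpace V] [BorelSpace V] [FiniteDimensional ℝ V]

theorem integrable_gauss (hb : 0 < b) : Integrable (gauss b : V → ℂ) := by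
  simpa [gauss] using! GaussianFourier.integrable_cexp_neg_mul_sq_norm_add (V := V)
    (b := b) (by simpa using hb) 0 0

theorem memLp_gauss (hb : 0 < b) {q : ℝ≥0∞} (hq : 1 ≤ q) : MemLp (gauss b : V → ℂ) q :=
  memLp_of_integrable_of_norm_le (integrable_gauss hb) (norm_gauss_le_one hb.le) hq

theorem integral_gauss_sq_ne_zero (hb : 0 < b) : ∫ t : V, gauss b t ^ 2 ≠ 0 := by
  have hreal : ∫ t : V, Real.exp (-(2 * b) * ‖t‖ ^ 2) ≠ 0 := by
    rw [GaussianFourier.integral_rexp_neg_mul_sq_norm (by positivity)]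
    positivity
  have hsq (t : V) : gauss b t ^ 2 = (Real.exp (-(2 * b) * ‖t‖ ^ 2) : ℝ) := by
    rw [gauss_eq_ofReal, ← Complex.ofReal_pow, ← Real.exp_nat_mul]
    congr 2
    push_cast
    ring
  simpa only [hsq, integral_complex_ofReal, ne_eq, Complex.ofReal_eq_zero] using hreal

theorem lintegral_enorm_gauss_mul_enorm_gauss_ne_zero :
    ∫⁻ t : V, ‖gauss b t‖ₑ * ‖gauss b t‖ₑ ≠ 0 := by
  have hmeas : Measurable fun t : V => ‖gauss b t‖ₑ * ‖gauss b t‖ₑ :=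
    continuous_gauss.measurable.enorm.mul continuous_gauss.measurable.enorm
  rw [ne_eq, lintegral_eq_zero_iff hmeas]
  intro h
  obtain ⟨t, ht⟩ := h.exists
  simp [gauss] at ht

theorem exists_lintegral_le_lintegral_eLpNorm_two_mul_gauss : ∃ C : ℝ≥0,
    ∀ N : V → ℝ≥0∞, Measurable N →
      ∫⁻ z, N z ≤
        C * ∫⁻ η, eLpNorm (fun ζ => N (ζ + η) * ‖gauss Real.pi ζ‖ₑ) 2 volume := by
  set A := ∫⁻ t : V, ‖gauss Real.pi t‖ₑ * ‖gauss Real.pi t‖ₑ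
  have hA : A ≠ 0 := lintegral_enorm_gauss_mul_enorm_gauss_ne_zero
  have hgauss : MemLp (gauss Real.pi : V → ℂ) 2 :=
    memLp_gauss Real.pi_pos one_le_two
  have hmeas : Measurable fun t : V => ‖gauss Real.pi t‖ₑ :=
    continuous_gauss.measurable.enorm
  lift A⁻¹ to ℝ≥0 using ENNReal.inv_ne_top.2 hA with B hB
  lift eLpNorm (gauss Real.pi : V → ℂ) 2 volume to ℝ≥0
    using hgauss.eLpNorm_ne_top with D hD
  have hA_top : A ≠ ∞ := by
    refine ne_top_of_le_ne_top ?_ (lintegral_mul_le_eLpNorm_mul_eLpNorm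
      (p := 2) (q := 2) hmeas.aemeasurable hmeas.aemeasurable)
    simp [eLpNorm_enorm, ← hD, ENNReal.mul_eq_top]
  refine ⟨B * D, fun N hN => ?_⟩
  have hle (η : V) : ∫⁻ ζ, N (ζ + η) * (‖gauss Real.pi ζ‖ₑ * ‖gauss Real.pi ζ‖ₑ) ≤
      D * eLpNorm (fun ζ => N (ζ + η) * ‖gauss Real.pi ζ‖ₑ) 2 volume := by
    have hprod : Measurable fun ζ => N (ζ + η) * ‖gauss Real.pi ζ‖ₑ :=
      (hN.comp (measurable_add_const η)).mul hmeas
    simpa only [mul_assoc, hD, eLpNorm_enorm, mul_comm (eLpNorm (gauss Real.pi) 2 volume)] using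
      lintegral_mul_le_eLpNorm_mul_eLpNorm (p := 2) (q := 2) (μ := volume) hprod.aemeasurable
        hmeas.aemeasurable
  calc ∫⁻ z, N z = B * (A * ∫⁻ z, N z) := by
        rw [hB, ← mul_assoc, ENNReal.inv_mul_cancel hA hA_top, one_mul]
    _ = B * ∫⁻ η, ∫⁻ ζ, N (ζ + η) * (‖gauss Real.pi ζ‖ₑ * ‖gauss Real.pi ζ‖ₑ) := by
        rw [lintegral_lintegral_comp_add_mul hN
          (h := fun t => ‖gauss Real.pi t‖ₑ * ‖gauss Real.pi t‖ₑ) (hmeas.mul hmeas)]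
    _ ≤ B * ∫⁻ η, D * eLpNorm (fun ζ => N (ζ + η) * ‖gauss Real.pi ζ‖ₑ) 2 volume := by
        gcongr with η
        exact hle η
    _ = _ := by
        rw [lintegral_const_mul' _ _ ENNReal.coe_ne_top, ENNReal.coe_mul, mul_assoc]

theorem integrable_mul_gauss (hb : 0 ≤ b) {f : V → ℂ} (hf : Integrable f) (x : V) :
    Integrable fun t => f t * gauss b (t - x) :=
  hf.mul_bdd (c := 1) (by fun_prop) (.of_forall fun _ => norm_gauss_le_one hb _)

theorem fourier_fourierChar_smul_gauss (hb : 0 < b) (c t : V) :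
    𝓕 (fun v => Real.fourierChar ⟪c, v⟫ • gauss b v) t =
      (Real.pi / b : ℂ) ^ (Module.finrank ℝ V / 2 : ℂ) * gauss (Real.pi ^ 2 / b) (t - c) := by
  have h := fourier_gaussian_innerProductSpace' (V := V) (b := b) (by simpa using hb) c t
  rw [norm_sub_rev] at h
  convert! h using 2
  · ext v
    rw [Circle.smul_def, Real.fourierChar_apply, gauss, smul_eq_mul, ← Complex.exp_add]
    congr 1
    push_cast
    ring
  · rw [gauss]
    congr 1
    push_cast
    ring

theorem fourier_gauss_pi : 𝓕 (gauss Real.pi : V → ℂ) = gauss Real.pi := by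
  ext t
  have hπ : (Real.pi : ℂ) ≠ 0 := ofReal_ne_zero.2 Real.pi_ne_zero
  have h := fourier_fourierChar_smul_gauss Real.pi_pos 0 t
  simpa [div_self hπ, pow_two, Real.pi_ne_zero] using h

theorem exists_enorm_fourier_mul_gauss_le (hb : 0 < b) : ∃ C : ℝ≥0, ∀ f : V → ℂ, Integrable f →
    ∀ c w, ‖𝓕 (fun t => f t * gauss (Real.pi ^ 2 / b) (t - c)) w‖ₑ ≤
      C * ∫⁻ v, ‖𝓕 f (v + w)‖ₑ * ‖gauss b v‖ₑ := by
  set κ : ℂ := (Real.pi / b : ℂ) ^ (Module.finrank ℝ V / 2 : ℂ)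
  have hκ : κ ≠ 0 := by
    simp [κ, cpow_eq_zero_iff, Real.pi_ne_zero, hb.ne']
  refine ⟨‖κ⁻¹‖₊, fun f hf c w => ?_⟩
  set g : V → ℂ := fun v => Real.fourierChar ⟪c, v⟫ • gauss b v
  have hg : Integrable g := by
    simpa [g, real_inner_comm] using integrable_fourierChar_smul (integrable_gauss hb) (-c)
  have hgauss (t : V) : gauss (Real.pi ^ 2 / b) (t - c) = κ⁻¹ * 𝓕 g t := by
    rw [fourier_fourierChar_smul_gauss hb, inv_mul_cancel_left₀ hκ]
  have hsmul : 𝓕 (fun t => f t * gauss (Real.pi ^ 2 / b) (t - c)) w =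
      κ⁻¹ * 𝓕 (fun t => f t * 𝓕 g t) w := by
    rw [Real.fourier_eq, Real.fourier_eq, ← integral_const_mul]
    congr 1 with t
    rw [hgauss, mul_smul_comm, mul_left_comm]
  rw [hsmul, enorm_mul, ← enorm_eq_nnnorm]
  gcongr
  simpa only [g, enorm_fourierChar_smul] using enorm_fourier_mul_fourier_le hf hg w

end Gaussian

section ShortTimeFourier

variable {ι : Type*} [Fintype ι] {F : EuclideanSpace ℝ ι → ℂ}

theorem fTrans_eq_fourier (f : EuclideanSpace ℝ ι → ℂ) : fTrans f = 𝓕 f := by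
  ext w
  rw [Real.fourier_eq', fTrans]
  congr 1 with t
  rw [smul_eq_mul, mul_comm]
  congr 2
  push_cast
  ring

theorem STFT_eq_fourier (F : EuclideanSpace ℝ ι → ℂ) (x : EuclideanSpace ℝ ι) :
    STFT F x = 𝓕 fun t => F t * gauss Real.pi (t - x) := by
  rw [← fTrans_eq_fourier]
  ext ω
  simp only [STFT, fTrans, gaussWin_eq_gauss, conj_gauss, real_inner_comm]

theorem continuous_STFT (hF : Integrable F) :
    Continuous fun q : EuclideanSpace ℝ ι × EuclideanSpace ℝ ι => STFT F q.1 q.2 := by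
  simp_rw [STFT_eq_fourier, Real.fourier_eq]
  refine continuous_of_dominated (bound := fun t => ‖F t‖) (fun q => ?_) (fun q => ?_) hF.norm ?_
  · exact (integrable_fourierChar_smul (integrable_mul_gauss Real.pi_pos.le hF q.1) q.2).1
  · filter_upwards with t
    rw [Circle.norm_smul, norm_mul]
    exact mul_le_of_le_one_right (norm_nonneg _) (norm_gauss_le_one Real.pi_pos.le _)
  · filter_upwards with t
    fun_prop

theorem measurable_enorm_STFT (hF : Integrable F) :
    Measurable (Function.uncurry fun x ω => ‖STFT F x ω‖ₑ) :=
  (continuous_STFT hF).measurable.enorm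

theorem continuous_STFT_left (hF : Integrable F) (ω : EuclideanSpace ℝ ι) :
    Continuous fun x => STFT F x ω :=
  (continuous_STFT hF).comp (f := fun x => (x, ω)) (by fun_prop)

theorem STFT_eq_convolution (F : EuclideanSpace ℝ ι → ℂ) (ω : EuclideanSpace ℝ ι) :
    (fun x => STFT F x ω) =
      (fun t => Real.fourierChar (-⟪t, ω⟫) • F t) ⋆[ContinuousLinearMap.mul ℂ ℂ]
        gauss Real.pi := by
  ext x
  rw [STFT_eq_fourier, Real.fourier_eq, convolution_def]
  congr 1 with t
  rw [ContinuousLinearMap.mul_apply', smul_mul_assoc, gauss_sub_comm]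

theorem integrable_STFT_left (hF : Integrable F) (ω : EuclideanSpace ℝ ι) :
    Integrable fun x => STFT F x ω := by
  rw [STFT_eq_convolution]
  exact (integrable_fourierChar_smul hF ω).integrable_convolution _ (integrable_gauss Real.pi_pos)

theorem fourier_STFT_left (hF : Integrable F) (ω : EuclideanSpace ℝ ι) :
    𝓕 (fun x => STFT F x ω) = fun ζ => 𝓕 F (ζ + ω) * gauss Real.pi ζ := by
  ext ζ
  rw [STFT_eq_convolution, Real.fourier_mul_convolution_eq (integrable_fourierChar_smul hF ω)
    (integrable_gauss Real.pi_pos), fourier_gauss_pi, fourier_fourierChar_smul]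

theorem eLpNorm_two_STFT_left (hF : Integrable F) (ω : EuclideanSpace ℝ ι) :
    eLpNorm (fun x => STFT F x ω) 2 volume =
      eLpNorm (fun ζ => 𝓕 F (ζ + ω) * gauss Real.pi ζ) 2 volume := by
  have hint : Integrable fun ζ => 𝓕 F (ζ + ω) * gauss Real.pi ζ :=
    (integrable_gauss Real.pi_pos).bdd_mul (c := ∫ t, ‖F t‖)
      ((continuous_fourier hF).comp (continuous_add_const ω)).aestronglyMeasurable
      (.of_forall fun _ => norm_fourier_le _ _)
  rw [← fourier_STFT_left hF] at hint ⊢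
  exact (eLpNorm_two_fourier (continuous_STFT_left hF ω) (integrable_STFT_left hF ω) hint).symm

theorem enorm_le_lintegral_enorm_STFT (hcont : Continuous F) (hF : Integrable F)
    (x : EuclideanSpace ℝ ι) : ‖F x‖ₑ ≤ ∫⁻ ω, ‖STFT F x ω‖ₑ := by
  simpa [STFT_eq_fourier, gauss_zero] using enorm_le_lintegral_enorm_fourier (by fun_prop)
    (integrable_mul_gauss Real.pi_pos.le hF x) x

theorem STFT_mul_integral_gauss_sq (hF : Integrable F) (x ω : EuclideanSpace ℝ ι) :
    STFT F x ω * ∫ t : EuclideanSpace ℝ ι, gauss Real.pi t ^ 2 =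
      ∫ y, 𝓕 (fun t => F t * gauss Real.pi (t - x) * gauss Real.pi (t - y) ^ 2) ω := by
  have hgauss_sq : Integrable fun t : EuclideanSpace ℝ ι => gauss Real.pi t ^ 2 := by
    simpa only [sub_zero, ← pow_two] using
      integrable_mul_gauss Real.pi_pos.le (integrable_gauss Real.pi_pos) (0 : EuclideanSpace ℝ ι)
  have h := integral_convolution (μ := volume) (ν := volume) (ContinuousLinearMap.mul ℂ ℂ)
    (integrable_fourierChar_smul (integrable_mul_gauss Real.pi_pos.le hF x) ω) hgauss_sq
  simp only [← Real.fourier_eq, ← STFT_eq_fourier, ContinuousLinearMap.mul_apply'] at h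
  rw [← h]
  congr 1 with y
  rw [convolution_def, Real.fourier_eq]
  congr 1 with t
  rw [ContinuousLinearMap.mul_apply', smul_mul_assoc, gauss_sub_comm Real.pi y t]

theorem exists_enorm_fourier_mul_gauss_mul_gauss_sq_le : ∃ C : ℝ≥0,
    ∀ F : EuclideanSpace ℝ ι → ℂ, Integrable F → ∀ x y ω,
      ‖𝓕 (fun t => F t * gauss Real.pi (t - x) * gauss Real.pi (t - y) ^ 2) ω‖ₑ ≤
        C * (‖gauss (Real.pi / 2) (x - y)‖ₑ *
          ∫⁻ v, ‖STFT F y (v + ω)‖ₑ * ‖gauss (Real.pi / 2) v‖ₑ) := by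
  obtain ⟨C, hC⟩ := exists_enorm_fourier_mul_gauss_le (V := EuclideanSpace ℝ ι)
    (half_pos Real.pi_pos)
  rw [show Real.pi ^ 2 / (Real.pi / 2) = 2 * Real.pi by field_simp] at hC
  refine ⟨C, fun F hF x y ω => ?_⟩
  set m := (2⁻¹ : ℝ) • (x + y)
  have hsplit : 𝓕 (fun t => F t * gauss Real.pi (t - x) * gauss Real.pi (t - y) ^ 2) ω =
      gauss (Real.pi / 2) (x - y) *
        𝓕 (fun t => F t * gauss Real.pi (t - y) * gauss (2 * Real.pi) (t - m)) ω := by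
    rw [Real.fourier_eq, Real.fourier_eq, ← integral_const_mul]
    congr 1 with t
    rw [mul_smul_comm]
    congr 1
    linear_combination F t * gauss Real.pi (t - y) * gauss_sub_mul_gauss_sub Real.pi t x y
  rw [hsplit, enorm_mul, mul_left_comm, STFT_eq_fourier]
  gcongr
  exact hC _ (integrable_mul_gauss Real.pi_pos.le hF y) m ω

/- Averaging `V_G F(x, ω)` over the translates of `G²` and absorbing one factor `G(t - y)` into the
window replaces `V_G F(x, ·)` by the transforms `V_G F(y, ·)`, smeared by Gaussians. -/
theorem exists_enorm_STFT_le : ∃ C : ℝ≥0, ∀ F : EuclideanSpace ℝ ι → ℂ, Integrable F → ∀ x ω,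
    ‖STFT F x ω‖ₑ ≤ C * ∫⁻ y, ‖gauss (Real.pi / 2) (x - y)‖ₑ *
      ∫⁻ v, ‖STFT F y (v + ω)‖ₑ * ‖gauss (Real.pi / 2) v‖ₑ := by
  obtain ⟨C, hC⟩ := exists_enorm_fourier_mul_gauss_mul_gauss_sq_le (ι := ι)
  set A := ∫ t : EuclideanSpace ℝ ι, gauss Real.pi t ^ 2
  have hA : A ≠ 0 := integral_gauss_sq_ne_zero Real.pi_pos
  refine ⟨‖A⁻¹‖₊ * C, fun F hF x ω => ?_⟩
  rw [← inv_mul_cancel_right₀ hA (STFT F x ω), mul_right_comm, mul_comm,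
    STFT_mul_integral_gauss_sq hF, enorm_mul, ENNReal.coe_mul, mul_assoc, enorm_eq_nnnorm,
    ← lintegral_const_mul' _ _ ENNReal.coe_ne_top]
  gcongr
  exact (enorm_integral_le_lintegral_enorm _).trans (lintegral_mono fun y => hC F hF x y ω)

theorem modNorm_one_eq_lintegral {p : ℝ≥0∞} (hp : p ≠ 0) (F : EuclideanSpace ℝ ι → ℂ) :
    modNorm p 1 F = ∫⁻ ω, eLpNorm (fun x => STFT F x ω) p volume := by
  simp only [modNorm, ← enorm_eq_nnnorm, lqNorm_eq_eLpNorm hp, lqNorm_eq_eLpNorm one_ne_zero,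
    eLpNorm_one_eq_lintegral_enorm, enorm_eq_self, eLpNorm_enorm]

theorem exists_enorm_STFT_le_lintegral_eLpNorm {p : ℝ≥0∞} (hp : 1 ≤ p) :
    ∃ C : ℝ≥0, ∀ F : EuclideanSpace ℝ ι → ℂ, Integrable F → ∀ x ω,
      ‖STFT F x ω‖ₑ ≤ C * ∫⁻ v, eLpNorm (fun y => STFT F y (v + ω)) p volume *
        ‖gauss (Real.pi / 2) v‖ₑ := by
  obtain ⟨C, hC⟩ := exists_enorm_STFT_le (ι := ι)
  have : ENNReal.HolderConjugate p p.conjExponent := .conjExponent hp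
  have hgauss : MemLp (gauss (Real.pi / 2) : EuclideanSpace ℝ ι → ℂ) p.conjExponent :=
    memLp_gauss (half_pos Real.pi_pos) (ENNReal.HolderConjugate.one_le p.conjExponent p)
  have hgauss_sub (x : EuclideanSpace ℝ ι) : Measurable fun y => ‖gauss (Real.pi / 2) (x - y)‖ₑ :=
    (continuous_gauss.comp (continuous_const.sub continuous_id)).measurable.enorm
  lift eLpNorm (gauss (Real.pi / 2) : EuclideanSpace ℝ ι → ℂ) p.conjExponent volume to ℝ≥0
    using hgauss.eLpNorm_ne_top with N hN
  refine ⟨C * N, fun F hF x ω => (hC F hF x ω).trans ?_⟩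
  rw [ENNReal.coe_mul, mul_assoc, ← lintegral_const_mul' (N : ℝ≥0∞) _ ENNReal.coe_ne_top]
  gcongr (C : ℝ≥0∞) * ?_
  calc ∫⁻ y, ‖gauss (Real.pi / 2) (x - y)‖ₑ *
        ∫⁻ v, ‖STFT F y (v + ω)‖ₑ * ‖gauss (Real.pi / 2) v‖ₑ
      = ∫⁻ v, (∫⁻ y, ‖gauss (Real.pi / 2) (x - y)‖ₑ * ‖STFT F y (v + ω)‖ₑ) *
          ‖gauss (Real.pi / 2) v‖ₑ :=
        lintegral_mul_lintegral_comp_add_mul_swap (measurable_enorm_STFT hF)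
          (hgauss_sub x) continuous_gauss.measurable.enorm ω
    _ ≤ ∫⁻ v, N * (eLpNorm (fun y => STFT F y (v + ω)) p volume * ‖gauss (Real.pi / 2) v‖ₑ) := by
        simp only [← mul_assoc, hN]
        gcongr with v
        rw [← eLpNorm_comp_measurePreserving continuous_gauss.aestronglyMeasurable
          (Measure.measurePreserving_sub_left volume x)]
        simpa only [eLpNorm_enorm, Function.comp_def] using
          lintegral_mul_le_eLpNorm_mul_eLpNorm (p := p.conjExponent) (q := p) (μ := volume)
            (hgauss_sub x).aemeasurable
            (continuous_STFT_left hF (v + ω)).enorm.measurable.aemeasurable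

theorem measurable_eLpNorm_STFT_left (hF : Integrable F) (p : ℝ≥0∞) :
    Measurable fun ω => eLpNorm (fun x => STFT F x ω) p volume := by
  simpa only [eLpNorm_enorm] using measurable_eLpNorm_left (measurable_enorm_STFT hF) p

theorem exists_lintegral_iSup_enorm_STFT_le {p : ℝ≥0∞} (hp : 1 ≤ p) :
    ∃ C : ℝ≥0, ∀ F : EuclideanSpace ℝ ι → ℂ, Integrable F →
      ∫⁻ ω, ⨆ x, ‖STFT F x ω‖ₑ ≤ C * modNorm p 1 F := by
  obtain ⟨C, hC⟩ := exists_enorm_STFT_le_lintegral_eLpNorm (ι := ι) hp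
  have hgauss : Integrable (gauss (Real.pi / 2) : EuclideanSpace ℝ ι → ℂ) :=
    integrable_gauss (half_pos Real.pi_pos)
  lift ∫⁻ v : EuclideanSpace ℝ ι, ‖gauss (Real.pi / 2) v‖ₑ to ℝ≥0
    using hgauss.2.ne with N hN
  refine ⟨C * N, fun F hF => ?_⟩
  calc ∫⁻ ω, ⨆ x, ‖STFT F x ω‖ₑ
      ≤ ∫⁻ ω, C * ∫⁻ v, eLpNorm (fun y => STFT F y (v + ω)) p volume *
          ‖gauss (Real.pi / 2) v‖ₑ := lintegral_mono fun ω => iSup_le fun x => hC F hF x ω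
    _ = (C * N : ℝ≥0) * modNorm p 1 F := by
        rw [lintegral_const_mul' _ _ ENNReal.coe_ne_top, lintegral_lintegral_comp_add_mul
          (measurable_eLpNorm_STFT_left hF p) continuous_gauss.measurable.enorm, ← hN,
          modNorm_one_eq_lintegral (one_pos.trans_le hp).ne', ENNReal.coe_mul, mul_assoc]

theorem exists_enorm_le_modNorm {p : ℝ≥0∞} (hp : 1 ≤ p) :
    ∃ C : ℝ≥0, ∀ F : EuclideanSpace ℝ ι → ℂ, Continuous F → Integrable F → ∀ x,
      ‖F x‖ₑ ≤ C * modNorm p 1 F := by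
  obtain ⟨C, hC⟩ := exists_lintegral_iSup_enorm_STFT_le (ι := ι) hp
  refine ⟨C, fun F hcont hF x => (enorm_le_lintegral_enorm_STFT hcont hF x).trans ?_⟩
  exact (lintegral_mono fun ω => le_iSup (fun x => ‖STFT F x ω‖ₑ) x).trans (hC F hF)

theorem exists_modNorm_le_modNorm {p q : ℝ≥0∞} (hp : 1 ≤ p) (hpq : p ≤ q) :
    ∃ C : ℝ≥0, ∀ F : EuclideanSpace ℝ ι → ℂ, Integrable F →
      modNorm q 1 F ≤ C * modNorm p 1 F := by
  obtain ⟨C, hC⟩ := exists_lintegral_iSup_enorm_STFT_le (ι := ι) hp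
  have hp0 : p ≠ 0 := (one_pos.trans_le hp).ne'
  have hq0 : q ≠ 0 := (one_pos.trans_le (hp.trans hpq)).ne'
  refine ⟨C + 1, fun F hF => ?_⟩
  calc modNorm q 1 F
      ≤ ∫⁻ ω, (⨆ x, ‖STFT F x ω‖ₑ) + eLpNorm (fun x => STFT F x ω) p volume := by
        rw [modNorm_one_eq_lintegral hq0]
        refine lintegral_mono fun ω => (eLpNorm_le_eLpNorm_top_add_eLpNorm hp0 hpq).trans ?_
        gcongr
        rw [eLpNorm_exponent_top]
        exact eLpNormEssSup_le_of_ae_enorm_bound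
          (.of_forall fun x => le_iSup (fun x => ‖STFT F x ω‖ₑ) x)
    _ ≤ C * modNorm p 1 F + modNorm p 1 F := by
        rw [lintegral_add_right _ (measurable_eLpNorm_STFT_left hF p),
          ← modNorm_one_eq_lintegral hp0]
        gcongr
        exact hC F hF
    _ = (C + 1 : ℝ≥0) * modNorm p 1 F := by
        push_cast
        ring

end ShortTimeFourier

noncomputable section Kernel

variable {ι : Type*} [Fintype ι] {α : EuclideanSpace ℝ ι → EuclideanSpace ℝ ι → ℂ}

/-- Short-time Fourier transform in the first variable and Fourier transform in the second variable
of a symbol `α`. It is one integral over the product space, so that by Fubini's theorem the two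
transforms may be taken in either order. -/
@[irreducible]
def symbolSTFT (α : EuclideanSpace ℝ ι → EuclideanSpace ℝ ι → ℂ) (x ξ z : EuclideanSpace ℝ ι) : ℂ :=
  ∫ q : EuclideanSpace ℝ ι × EuclideanSpace ℝ ι,
    Real.fourierChar (-⟪q.1, ξ⟫) • Real.fourierChar (-⟪q.2, z⟫) •
      (α q.1 q.2 * gauss Real.pi (q.1 - x))

theorem norm_symbolSTFT_integrand_le (α : EuclideanSpace ℝ ι → EuclideanSpace ℝ ι → ℂ)
    (x ξ z : EuclideanSpace ℝ ι) (q : EuclideanSpace ℝ ι × EuclideanSpace ℝ ι) :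
    ‖Real.fourierChar (-⟪q.1, ξ⟫) • Real.fourierChar (-⟪q.2, z⟫) •
      (α q.1 q.2 * gauss Real.pi (q.1 - x))‖ ≤ ‖α q.1 q.2‖ := by
  rw [Circle.norm_smul, Circle.norm_smul, norm_mul]
  exact mul_le_of_le_one_right (norm_nonneg _) (norm_gauss_le_one Real.pi_nonneg _)

theorem integrable_symbolSTFT_integrand (hα : Integrable (Function.uncurry α))
    (x ξ z : EuclideanSpace ℝ ι) :
    Integrable fun q : EuclideanSpace ℝ ι × EuclideanSpace ℝ ι =>
      Real.fourierChar (-⟪q.1, ξ⟫) • Real.fourierChar (-⟪q.2, z⟫) •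
        (α q.1 q.2 * gauss Real.pi (q.1 - x)) := by
  have hgauss : AEStronglyMeasurable
      (fun q : EuclideanSpace ℝ ι × EuclideanSpace ℝ ι => gauss Real.pi (q.1 - x)) :=
    Continuous.aestronglyMeasurable (by fun_prop)
  refine hα.mono (Continuous.aestronglyMeasurable (by fun_prop) |>.smul
    (Continuous.aestronglyMeasurable (by fun_prop) |>.smul (hα.1.mul hgauss)))
    (.of_forall fun q => norm_symbolSTFT_integrand_le α x ξ z q)

theorem symbolSTFT_eq_STFT (hα : Integrable (Function.uncurry α)) (x ξ z : EuclideanSpace ℝ ι) :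
    symbolSTFT α x ξ z = STFT (fun u => 𝓕 (α u) z) x ξ := by
  rw [symbolSTFT, Measure.volume_eq_prod,
    integral_prod _ (integrable_symbolSTFT_integrand hα x ξ z), STFT_eq_fourier, Real.fourier_eq]
  congr 1 with u
  simp only [Real.fourier_eq, ← integral_mul_const, smul_mul_assoc, integral_circle_smul]

theorem symbolSTFT_eq_fourier (hα : Integrable (Function.uncurry α)) (x ξ z : EuclideanSpace ℝ ι) :
    symbolSTFT α x ξ z = 𝓕 (fun w => STFT (fun u => α u w) x ξ) z := by
  rw [symbolSTFT, Measure.volume_eq_prod,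
    integral_prod_symm _ (integrable_symbolSTFT_integrand hα x ξ z), Real.fourier_eq]
  congr 1 with w
  simp only [STFT_eq_fourier, Real.fourier_eq, smul_comm (Real.fourierChar (-⟪_, ξ⟫)),
    integral_circle_smul]

theorem continuous_symbolSTFT (hα : Integrable (Function.uncurry α)) :
    Continuous fun q : EuclideanSpace ℝ ι × EuclideanSpace ℝ ι × EuclideanSpace ℝ ι =>
      symbolSTFT α q.1 q.2.1 q.2.2 := by
  simp only [symbolSTFT]
  refine continuous_of_dominated (bound := fun t => ‖α t.1 t.2‖)
    (fun q => (integrable_symbolSTFT_integrand hα _ _ _).1)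
    (fun q => .of_forall fun t => norm_symbolSTFT_integrand_le α _ _ _ t) hα.norm ?_
  filter_upwards with t
  fun_prop

theorem integrable_fourier_right (hα : Integrable (Function.uncurry α)) (z : EuclideanSpace ℝ ι) :
    Integrable fun u => 𝓕 (α u) z := by
  have hchar : Integrable (fun q : EuclideanSpace ℝ ι × EuclideanSpace ℝ ι =>
      Real.fourierChar (-⟪q.2, z⟫) • α q.1 q.2) (volume.prod volume) := by
    refine hα.mono (Continuous.aestronglyMeasurable (by fun_prop) |>.smul hα.1)
      (.of_forall fun q => ?_)
    rw [Circle.norm_smul, Function.uncurry]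
  simpa only [Real.fourier_eq] using hchar.integral_prod_left

theorem integrable_STFT_right (hα : Integrable (Function.uncurry α)) (x ξ : EuclideanSpace ℝ ι) :
    Integrable fun w => STFT (fun u => α u w) x ξ := by
  have hint := integrable_symbolSTFT_integrand hα x ξ 0
  rw [Measure.volume_eq_prod] at hint
  simpa [STFT_eq_fourier, Real.fourier_eq] using hint.integral_prod_right

theorem continuous_fourier_right (hcont : Continuous (Function.uncurry α))
    {g : EuclideanSpace ℝ ι → ℝ} (hg : Integrable g) (hle : ∀ u w, ‖α u w‖ ≤ g w)
    (z : EuclideanSpace ℝ ι) : Continuous fun u => 𝓕 (α u) z := by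
  simp_rw [Real.fourier_eq]
  refine continuous_of_dominated (bound := g) (fun u => ?_) (fun u => ?_) hg ?_
  · exact Continuous.aestronglyMeasurable (by fun_prop)
  · filter_upwards with w
    rw [Circle.norm_smul]
    exact hle u w
  · filter_upwards with w
    fun_prop

theorem measurable_eLpNorm_symbolSTFT (hα : Integrable (Function.uncurry α)) :
    Measurable (Function.uncurry fun ξ z => eLpNorm (fun x => symbolSTFT α x ξ z) 2 volume) := by
  have hmeas : Measurable fun q : EuclideanSpace ℝ ι × EuclideanSpace ℝ ι × EuclideanSpace ℝ ι =>
      ‖symbolSTFT α q.1 q.2.1 q.2.2‖ₑ := (continuous_symbolSTFT hα).enorm.measurable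
  simpa only [eLpNorm_enorm, Function.uncurry_def] using
    measurable_eLpNorm_left (K := fun x (q : EuclideanSpace ℝ ι × EuclideanSpace ℝ ι) =>
      ‖symbolSTFT α x q.1 q.2‖ₑ) hmeas 2

theorem eLpNorm_eLpNorm_symbolSTFT_mul_gauss (hα : Integrable (Function.uncurry α))
    (ξ η : EuclideanSpace ℝ ι) :
    eLpNorm (fun ζ => eLpNorm (fun x => symbolSTFT α x ξ (ζ + η)) 2 volume *
        ‖gauss Real.pi ζ‖ₑ) 2 volume =
      eLpNorm (fun x => eLpNorm (fun y => STFT (fun w => STFT (fun u => α u w) x ξ) y η) 2 volume)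
        2 volume := by
  have hmeas : Measurable fun q : EuclideanSpace ℝ ι × EuclideanSpace ℝ ι =>
      ‖gauss Real.pi q.1‖ₑ * ‖symbolSTFT α q.2 ξ (q.1 + η)‖ₑ := by
    refine Measurable.mul (Continuous.enorm (by fun_prop)).measurable
      (Continuous.enorm ?_).measurable
    exact (continuous_symbolSTFT hα).comp (f := fun q : _ × _ => (q.2, ξ, q.1 + η)) (by fun_prop)
  have hsymbol (ζ : EuclideanSpace ℝ ι) : Measurable fun x => ‖symbolSTFT α x ξ (ζ + η)‖ₑ :=
    ((continuous_symbolSTFT hα).comp (f := fun x => (x, ξ, ζ + η)) (by fun_prop)).enorm.measurable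
  calc _ = eLpNorm (fun ζ => eLpNorm (fun x => ‖gauss Real.pi ζ‖ₑ * ‖symbolSTFT α x ξ (ζ + η)‖ₑ)
          2 volume) 2 volume := by
        congr 1 with ζ
        rw [eLpNorm_const_mul _ (hsymbol ζ), eLpNorm_enorm, mul_comm]
    _ = eLpNorm (fun x => eLpNorm (fun ζ => ‖gauss Real.pi ζ‖ₑ * ‖symbolSTFT α x ξ (ζ + η)‖ₑ)
          2 volume) 2 volume :=
        eLpNorm_eLpNorm_comm two_ne_zero ENNReal.ofNat_ne_top hmeas
    _ = _ := by
        congr 1 with x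
        simp only [eLpNorm_two_STFT_left (integrable_STFT_right hα x ξ), symbolSTFT_eq_fourier hα,
          ← enorm_mul, eLpNorm_enorm, mul_comm]

theorem exists_lintegral_modNorm_fourier_le : ∃ C : ℝ≥0,
    ∀ α : EuclideanSpace ℝ ι → EuclideanSpace ℝ ι → ℂ, Integrable (Function.uncurry α) →
      ∫⁻ z, modNorm 2 1 (fun u => 𝓕 (α u) z) ≤
        C * ∫⁻ ξ, ∫⁻ η, eLpNorm (fun x =>
          eLpNorm (fun y => STFT (fun w => STFT (fun u => α u w) x ξ) y η) 2 volume) 2 volume := by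
  obtain ⟨C, hC⟩ := exists_lintegral_le_lintegral_eLpNorm_two_mul_gauss (V := EuclideanSpace ℝ ι)
  refine ⟨C, fun α hα => ?_⟩
  have hmeas := measurable_eLpNorm_symbolSTFT hα
  have hswap : ∫⁻ z, ∫⁻ ξ, eLpNorm (fun x => symbolSTFT α x ξ z) 2 volume =
      ∫⁻ ξ, ∫⁻ z, eLpNorm (fun x => symbolSTFT α x ξ z) 2 volume :=
    lintegral_lintegral_swap (hmeas.comp measurable_swap).aemeasurable
  simp only [modNorm_one_eq_lintegral two_ne_zero, ← symbolSTFT_eq_STFT hα, hswap,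
    ← eLpNorm_eLpNorm_symbolSTFT_mul_gauss hα]
  rw [← lintegral_const_mul' _ _ ENNReal.coe_ne_top]
  gcongr with ξ
  exact hC _ hmeas.of_uncurry_left

theorem exists_enorm_fourier_le_lintegral_le : ∃ C : ℝ≥0,
    ∀ α : EuclideanSpace ℝ ι → EuclideanSpace ℝ ι → ℂ, Continuous (Function.uncurry α) →
      Integrable (Function.uncurry α) →
      ∀ g : EuclideanSpace ℝ ι → ℝ, Integrable g → (∀ u w, ‖α u w‖ ≤ g w) →
        ∃ H : EuclideanSpace ℝ ι → ℝ≥0∞, Measurable H ∧ (∀ u z, ‖𝓕 (α u) z‖ₑ ≤ H z) ∧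
          ∫⁻ z, H z ≤ C * ∫⁻ ξ, ∫⁻ η, eLpNorm (fun x => eLpNorm (fun y =>
            STFT (fun w => STFT (fun u => α u w) x ξ) y η) 2 volume) 2 volume := by
  obtain ⟨C₁, hC₁⟩ := exists_enorm_le_modNorm (ι := ι) (p := 2) one_le_two
  obtain ⟨C₂, hC₂⟩ := exists_lintegral_modNorm_fourier_le (ι := ι)
  refine ⟨C₁ * C₂, fun α hcont hα g hg hle =>
    ⟨fun z => C₁ * modNorm 2 1 fun u => 𝓕 (α u) z, ?_, fun u z => ?_, ?_⟩⟩
  · simp only [modNorm_one_eq_lintegral two_ne_zero, ← symbolSTFT_eq_STFT hα]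
    exact (measurable_eLpNorm_symbolSTFT hα).lintegral_prod_left'.const_mul _
  · exact hC₁ _ (continuous_fourier_right hcont hg hle z) (integrable_fourier_right hα z) u
  · rw [lintegral_const_mul' _ _ ENNReal.coe_ne_top, ENNReal.coe_mul, mul_assoc]
    gcongr
    exact hC₂ α hα

end Kernel

section PhaseSpace

variable {d : ℕ} {a : EuclideanSpace ℝ (Fin d ⊕ Fin d) → ℂ}

theorem uncurry_pairE_eq_sumEquivProd_symm :
    Function.uncurry (pairE (d := d)) = EuclideanSpace.sumEquivProd.symm := by
  ext q i
  cases i <;> rfl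

theorem continuous_uncurry_pairE : Continuous (Function.uncurry (pairE (d := d))) := by
  rw [uncurry_pairE_eq_sumEquivProd_symm]
  exact EuclideanSpace.sumEquivProd.symm.continuous

theorem measurableEmbedding_uncurry_pairE :
    MeasurableEmbedding (Function.uncurry (pairE (d := d))) := by
  rw [uncurry_pairE_eq_sumEquivProd_symm]
  exact EuclideanSpace.sumEquivProd.symm.toHomeomorph.measurableEmbedding

theorem measurePreserving_uncurry_pairE :
    MeasurePreserving (Function.uncurry (pairE (d := d))) := by
  rw [uncurry_pairE_eq_sumEquivProd_symm]
  exact (PiLp.sumPiLpEquivProdLpPiLp (𝕜 := ℝ) 2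
    fun _ : Fin d ⊕ Fin d => ℝ).symm.measurePreserving.comp (WithLp.volume_preserving_toLp _ _)

theorem inner_pairE_pairE (x y ξ η : EuclideanSpace ℝ (Fin d)) :
    ⟪pairE x y, pairE ξ η⟫ = ⟪x, ξ⟫ + ⟪y, η⟫ := by
  simp [pairE, PiLp.inner_apply, Fintype.sum_sum_type]

theorem pairE_sub_pairE (x y ξ η : EuclideanSpace ℝ (Fin d)) :
    pairE x y - pairE ξ η = pairE (x - ξ) (y - η) := by
  ext i
  cases i <;> simp [pairE]

theorem norm_pairE_sq (x y : EuclideanSpace ℝ (Fin d)) : ‖pairE x y‖ ^ 2 = ‖x‖ ^ 2 + ‖y‖ ^ 2 := by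
  simp only [← real_inner_self_eq_norm_sq, inner_pairE_pairE]

theorem norm_le_norm_pairE (x y : EuclideanSpace ℝ (Fin d)) : ‖y‖ ≤ ‖pairE x y‖ := by
  refine le_of_sq_le_sq ?_ (norm_nonneg _)
  rw [norm_pairE_sq]
  exact le_add_of_nonneg_left (sq_nonneg _)

theorem gauss_pairE (b : ℝ) (x y : EuclideanSpace ℝ (Fin d)) :
    gauss b (pairE x y) = gauss b x * gauss b y := by
  simp only [gauss_eq_ofReal, ← Complex.ofReal_mul, ← Real.exp_add, norm_pairE_sq]
  ring_nf

theorem integrable_uncurry_pairE (ha : Integrable a) :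
    Integrable (Function.uncurry fun u w => a (pairE u w)) :=
  (measurePreserving_uncurry_pairE.integrable_comp_emb measurableEmbedding_uncurry_pairE).2 ha

theorem STFT_pairE (ha : Integrable a) (x y ξ η : EuclideanSpace ℝ (Fin d)) :
    STFT a (pairE x y) (pairE ξ η) = STFT (fun w => STFT (fun u => a (pairE u w)) x ξ) y η := by
  have hint : Integrable (Function.uncurry fun u w => a (pairE u w) * gauss Real.pi (w - y)) :=
    (integrable_uncurry_pairE ha).mul_bdd (c := 1)
      (Continuous.aestronglyMeasurable (by fun_prop))
      (.of_forall fun q => norm_gauss_le_one Real.pi_nonneg (q.2 - y))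
  calc STFT a (pairE x y) (pairE ξ η)
      = symbolSTFT (fun u w => a (pairE u w) * gauss Real.pi (w - y)) x ξ η := by
        rw [STFT_eq_fourier, Real.fourier_eq,
          ← measurePreserving_uncurry_pairE.integral_comp measurableEmbedding_uncurry_pairE,
          symbolSTFT]
        congr 1 with q
        simp only [Function.uncurry, inner_pairE_pairE, pairE_sub_pairE, gauss_pairE, neg_add,
          AddChar.map_add_eq_mul, mul_smul]
        rw [mul_assoc, mul_comm (gauss _ _)]
    _ = 𝓕 (fun w => STFT (fun u => a (pairE u w) * gauss Real.pi (w - y)) x ξ) η :=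
        symbolSTFT_eq_fourier hint x ξ η
    _ = STFT (fun w => STFT (fun u => a (pairE u w)) x ξ) y η := by
        simp only [STFT_eq_fourier, Real.fourier_eq, ← integral_mul_const, smul_mul_assoc,
          mul_right_comm]

theorem lintegral_eq_lintegral_lintegral_pairE
    {φ : EuclideanSpace ℝ (Fin d ⊕ Fin d) → ℝ≥0∞} (hφ : Measurable φ) :
    ∫⁻ ω, φ ω = ∫⁻ ξ, ∫⁻ η, φ (pairE ξ η) := by
  rw [← measurePreserving_uncurry_pairE.lintegral_comp hφ, Measure.volume_eq_prod]
  exact lintegral_prod _ (hφ.comp continuous_uncurry_pairE.measurable).aemeasurable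

theorem eLpNorm_eq_eLpNorm_eLpNorm_pairE {p : ℝ≥0∞} (hp : p ≠ 0) (hp_top : p ≠ ∞)
    (ha : Continuous a) :
    eLpNorm a p volume = eLpNorm (fun x => eLpNorm (fun y => a (pairE x y)) p volume) p volume := by
  have hmeas : Measurable (Function.uncurry fun x y => ‖a (pairE x y)‖ₑ) :=
    (ha.comp continuous_uncurry_pairE).enorm.measurable
  calc eLpNorm a p volume = eLpNorm (a ∘ Function.uncurry pairE) p volume :=
        (eLpNorm_comp_measurePreserving ha.aestronglyMeasurable
          measurePreserving_uncurry_pairE).symm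
    _ = eLpNorm (Function.uncurry fun x y => ‖a (pairE x y)‖ₑ) p (volume.prod volume) :=
        (eLpNorm_enorm _).symm
    _ = eLpNorm (fun x => eLpNorm (fun y => a (pairE x y)) p volume) p volume := by
        simp only [eLpNorm_uncurry hp hp_top hmeas, eLpNorm_enorm]

theorem modNorm_one_eq_lintegral_eLpNorm_pairE {p : ℝ≥0∞} (hp : p ≠ 0) (hp_top : p ≠ ∞)
    (ha : Integrable a) :
    modNorm p 1 a = ∫⁻ ξ, ∫⁻ η, eLpNorm (fun x => eLpNorm (fun y =>
      STFT (fun w => STFT (fun u => a (pairE u w)) x ξ) y η) p volume) p volume := by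
  rw [modNorm_one_eq_lintegral hp,
    lintegral_eq_lintegral_lintegral_pairE (measurable_eLpNorm_STFT_left ha p)]
  simp only [eLpNorm_eq_eLpNorm_eLpNorm_pairE hp hp_top (continuous_STFT_left ha _), STFT_pairE ha]

theorem exists_integrable_norm_pairE_le
    (a : SchwartzMap (EuclideanSpace ℝ (Fin d ⊕ Fin d)) ℂ) :
    ∃ g : EuclideanSpace ℝ (Fin d) → ℝ, Integrable g ∧ ∀ u w, ‖a (pairE u w)‖ ≤ g w := by
  set k := Module.finrank ℝ (EuclideanSpace ℝ (Fin d)) + 1 with hk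
  set M := 2 ^ k * (Finset.Iic (k, 0)).sup (fun m => SchwartzMap.seminorm ℝ m.1 m.2) a
  refine ⟨fun w => M * (1 + ‖w‖) ^ (-(k : ℝ)),
    (integrable_one_add_norm (by simp [hk])).const_mul _, fun u w => ?_⟩
  have hdecay : (1 + ‖pairE u w‖) ^ k * ‖a (pairE u w)‖ ≤ M := by
    simpa only [norm_iteratedFDeriv_zero] using
      SchwartzMap.one_add_le_sup_seminorm_apply (𝕜 := ℝ) (m := (k, 0)) le_rfl le_rfl a (pairE u w)
  beta_reduce
  rw [Real.rpow_neg (by positivity), Real.rpow_natCast, ← div_eq_mul_inv,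
    le_div_iff₀ (by positivity), mul_comm]
  refine le_trans ?_ hdecay
  gcongr
  exact norm_le_norm_pairE u w

theorem KNop_eq_integral_fourier_mul {f : EuclideanSpace ℝ (Fin d) → ℂ}
    (x : EuclideanSpace ℝ (Fin d)) (ha : Integrable fun w => a (pairE x w)) (hf : Integrable f) :
    KNop a f x = ∫ z, 𝓕 (fun w => a (pairE x w)) z * f (x + z) := by
  have hphase (w : EuclideanSpace ℝ (Fin d)) :
      cexp (I * (2 * Real.pi * (⟪x, w⟫ : ℝ))) = Real.fourierChar (-⟪w, -x⟫) := by
    rw [Real.fourierChar_apply, inner_neg_right, neg_neg, real_inner_comm]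
    push_cast
    ring_nf
  calc KNop a f x = ∫ w, (Real.fourierChar (-⟪w, -x⟫) • a (pairE x w)) * 𝓕 f w := by
        simp only [KNop, fTrans_eq_fourier, hphase, Circle.smul_def, smul_eq_mul]
        congr 1 with w
        ring
    _ = ∫ z, 𝓕 (fun w => a (pairE x w)) (z + -x) * f z := by
        simp only [← integral_fourier_mul_eq_flip (integrable_fourierChar_smul ha (-x)) hf,
          fourier_fourierChar_smul]
    _ = ∫ z, 𝓕 (fun w => a (pairE x w)) z * f (x + z) := by
        rw [← integral_add_left_eq_self _ x]
        simp only [add_neg_cancel_comm]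

theorem exists_enorm_KNop_le_lintegral {p : ℝ≥0∞} (hp : 1 ≤ p) (hp2 : p ≤ 2) : ∃ C : ℝ≥0,
    ∀ a : SchwartzMap (EuclideanSpace ℝ (Fin d ⊕ Fin d)) ℂ,
      ∃ H : EuclideanSpace ℝ (Fin d) → ℝ≥0∞, Measurable H ∧ ∫⁻ z, H z ≤ C * modNorm p 1 a ∧
        ∀ f : EuclideanSpace ℝ (Fin d) → ℂ, Integrable f →
          ∀ x, ‖KNop a f x‖ₑ ≤ ∫⁻ z, H z * ‖f (x + z)‖ₑ := by
  obtain ⟨C₁, hC₁⟩ := exists_enorm_fourier_le_lintegral_le (ι := Fin d)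
  obtain ⟨C₂, hC₂⟩ := exists_modNorm_le_modNorm (ι := Fin d ⊕ Fin d) hp hp2
  refine ⟨C₁ * C₂, fun a => ?_⟩
  have hcont : Continuous (Function.uncurry fun u w => a (pairE u w)) :=
    a.continuous.comp continuous_uncurry_pairE
  obtain ⟨g, hg, hle⟩ := exists_integrable_norm_pairE_le a
  obtain ⟨H, hH, hker, hHint⟩ := hC₁ _ hcont (integrable_uncurry_pairE a.integrable) g hg hle
  refine ⟨H, hH, ?_, fun f hf x => ?_⟩
  · rw [← modNorm_one_eq_lintegral_eLpNorm_pairE two_ne_zero ENNReal.ofNat_ne_top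
      a.integrable] at hHint
    rw [ENNReal.coe_mul, mul_assoc]
    refine hHint.trans ?_
    gcongr
    exact hC₂ a a.integrable
  · have hx : Integrable fun w => a (pairE x w) :=
      hg.mono' (hcont.uncurry_left x).aestronglyMeasurable (.of_forall (hle x))
    rw [KNop_eq_integral_fourier_mul x hx hf]
    refine (enorm_integral_le_lintegral_enorm _).trans (lintegral_mono fun z => ?_)
    rw [enorm_mul]
    gcongr
    exact hker x z

end PhaseSpace

/-- symbols in `M^{p,1}`, `1 ≤ p ≤ 2`, give operators bounded on
every Wiener amalgam space `W(L^r,L^s)`. -/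
theorem kn_Mp1_bounded_on_amalgam (d : ℕ) (p r s : ℝ≥0∞)
    (hp1 : 1 ≤ p) (hp2 : p ≤ 2) (hr : 1 ≤ r) (hs : 1 ≤ s) :
    ∃ C : ℝ, 0 < C ∧
      ∀ (a : SchwartzMap (EuclideanSpace ℝ (Fin d ⊕ Fin d)) ℂ)
        (f : SchwartzMap (EuclideanSpace ℝ (Fin d)) ℂ),
        wNorm d r s (KNop ⇑a ⇑f) ≤
          ENNReal.ofReal C * modNorm p 1 ⇑a * wNorm d r s ⇑f := by
  obtain ⟨C, hC⟩ := exists_enorm_KNop_le_lintegral (d := d) hp1 hp2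
  refine ⟨2 ^ d * C + 1, by positivity, fun a f => ?_⟩
  obtain ⟨H, hH, hHint, hKN⟩ := hC a
  have hconst : (2 ^ d * C : ℝ≥0∞) ≤ ENNReal.ofReal (2 ^ d * C + 1) := by
    rw [← ENNReal.ofReal_coe_nnreal (p := C), ← ENNReal.ofReal_ofNat 2,
      ← ENNReal.ofReal_pow zero_le_two, ← ENNReal.ofReal_mul (by positivity)]
    exact ENNReal.ofReal_le_ofReal (le_add_of_nonneg_right zero_le_one)
  calc wNorm d r s (KNop a f)
      ≤ 2 ^ d * (∫⁻ z, H z) * wNorm d r s f :=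
        wNorm_le_of_enorm_le_lintegral_mul_comp_add hr hs hH f.continuous.measurable
          (hKN f f.integrable)
    _ ≤ 2 ^ d * (C * modNorm p 1 a) * wNorm d r s f := by gcongr
    _ = 2 ^ d * C * modNorm p 1 a * wNorm d r s f := by rw [← mul_assoc (2 ^ d)]
    _ ≤ ENNReal.ofReal (2 ^ d * C + 1) * modNorm p 1 a * wNorm d r s f := by gcongr
end

section
/- There exists a constant C > 0 such that for every Schwartz function a on ℝ^{2d} there exists a nonnegative function F ∈ L¹(ℝ^d) with ‖F‖_{L¹} ≤ C · ‖a‖_{M^{2,1}} and such that the integral kernel K(x,y) = ∫_{ℝ^d} a(x,ω) e^{2πi(x−y)·ω} dω of the operator a(x,D) satisfies |K(x,y)| ≤ F(x−y) for all x, y ∈ ℝ^d. -/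
open MeasureTheory SchwartzMap Complex ENNReal NNReal

/-!
The kernel `K(x, y)` is the partial Fourier transform of `a` in its second variable at the
frequency `y - x`. As a function of `x` its Fourier transform is the slice `𝓕 a (·, y - x)`, so
Fourier inversion bounds `|K(x, y)|`, uniformly in `x`, by the `L¹` norm `F (x - y)` of that slice,
and `‖F‖₁ ≤ ‖𝓕 a‖₁` by Tonelli.

To control `‖𝓕 a‖₁`, note that up to a phase `V_G a (·, ω)` is the inverse Fourier transform of
`G(· - ω) 𝓕 a`, because `G` is its own Fourier transform; hence `‖V_G a (·, ω)‖₂ = ‖G(· - ω) 𝓕 a‖₂`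
by Plancherel. Cauchy–Schwarz against `G(· - ω)` and integration over `ω` then give
`‖𝓕 a‖₁ ‖G‖₂² ≤ ‖a‖_{M^{2,1}} ‖G‖₂`.
-/

open FourierTransform Real

section ProductMeasure

variable {α β E : Type*} [MeasurableSpace α] [MeasurableSpace β] [NormedAddCommGroup E]
  {μ : Measure α} {ν : Measure β} [SFinite μ] [SFinite ν]

lemma eLpNorm_integral_norm_prod_right_le {f : α × β → E}
    (hf : AEStronglyMeasurable f (μ.prod ν)) :
    eLpNorm (fun y ↦ ∫ x, ‖f (x, y)‖ ∂μ) 1 ν ≤ eLpNorm f 1 (μ.prod ν) := by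
  simp only [eLpNorm_one_eq_lintegral_enorm]
  calc ∫⁻ y, ‖∫ x, ‖f (x, y)‖ ∂μ‖ₑ ∂ν
      ≤ ∫⁻ y, ∫⁻ x, ‖f (x, y)‖ₑ ∂μ ∂ν := by
        gcongr with y
        simpa only [enorm_norm] using enorm_integral_le_lintegral_enorm fun x ↦ ‖f (x, y)‖
    _ = ∫⁻ p, ‖f p‖ₑ ∂μ.prod ν := (lintegral_prod_symm _ hf.enorm).symm

variable {V W : Type*}
  [NormedAddCommGroup V] [InnerProductSpace ℝ V] [FiniteDimensional ℝ V]
  [MeasurableSpace V] [BorelSpace V]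
  [NormedAddCommGroup W] [InnerProductSpace ℝ W] [FiniteDimensional ℝ W]
  [MeasurableSpace W] [BorelSpace W]

lemma integrable_integral_norm_toLp {f : WithLp 2 (V × W) → E} (hf : Integrable f) :
    Integrable fun w ↦ ∫ v, ‖f (WithLp.toLp 2 (v, w))‖ :=
  ((WithLp.volume_preserving_toLp V W).integrable_comp_of_integrable hf).norm.integral_prod_right

lemma eLpNorm_integral_norm_toLp_le {f : WithLp 2 (V × W) → E}
    (hf : AEStronglyMeasurable f) :
    eLpNorm (fun w ↦ ∫ v, ‖f (WithLp.toLp 2 (v, w))‖) 1 volume ≤ eLpNorm f 1 volume := by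
  have h_toLp := WithLp.volume_preserving_toLp V W
  exact (eLpNorm_integral_norm_prod_right_le (hf.comp_measurePreserving h_toLp)).trans_eq
    (eLpNorm_comp_measurePreserving hf h_toLp)

end ProductMeasure

section SlidingWindow

variable {G 𝕜 E : Type*} [AddCommGroup G] [MeasurableSpace G] [MeasurableAdd₂ G] [MeasurableNeg G]
  [NormedRing 𝕜] [NormedAddCommGroup E] [Module 𝕜 E] [NormSMulClass 𝕜 E]
  {μ : Measure G} [SFinite μ] [μ.IsAddLeftInvariant] [μ.IsNegInvariant]

lemma lintegral_eLpNorm_smul_smul_comp_sub {f : G → E} {g : G → 𝕜}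
    (hf : AEStronglyMeasurable f μ) (hg : AEStronglyMeasurable g μ) :
    ∫⁻ ω, eLpNorm (fun η ↦ g (η - ω) • g (η - ω) • f η) 1 μ ∂μ =
      eLpNorm f 1 μ * eLpNorm g 2 μ ^ 2 := by
  have h_meas : AEMeasurable (fun p : G × G ↦ ‖g (p.2 - p.1)‖ₑ ^ 2 * ‖f p.2‖ₑ) (μ.prod μ) := by
    have h_sub : AEMeasurable (fun p : G × G ↦ ‖g (p.2 - p.1)‖ₑ) (μ.prod μ) :=
      hg.enorm.comp_quasiMeasurePreserving <|
        (quasiMeasurePreserving_sub_of_right_invariant μ μ).comp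
          Measure.measurePreserving_swap.quasiMeasurePreserving
    exact (h_sub.pow_const 2).mul hf.enorm.comp_snd
  have h_sq : eLpNorm g 2 μ ^ 2 = ∫⁻ η, ‖g η‖ₑ ^ 2 ∂μ := by
    simpa using eLpNorm_nnreal_pow_eq_lintegral (f := g) (μ := μ) (two_ne_zero' ℝ≥0)
  simp only [eLpNorm_one_eq_lintegral_enorm, enorm_smul, ← mul_assoc, ← sq]
  calc ∫⁻ ω, ∫⁻ η, ‖g (η - ω)‖ₑ ^ 2 * ‖f η‖ₑ ∂μ ∂μ
      = ∫⁻ η, ∫⁻ ω, ‖g (η - ω)‖ₑ ^ 2 * ‖f η‖ₑ ∂μ ∂μ := lintegral_lintegral_swap h_meas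
    _ = ∫⁻ η, (∫⁻ ω, ‖g ω‖ₑ ^ 2 ∂μ) * ‖f η‖ₑ ∂μ := by
        congr with η
        rw [lintegral_mul_const' _ _ enorm_ne_top,
          lintegral_sub_left_eq_self (fun ω ↦ ‖g ω‖ₑ ^ 2)]
    _ = (∫⁻ η, ‖f η‖ₑ ∂μ) * eLpNorm g 2 μ ^ 2 := by
        rw [lintegral_const_mul'' _ hf.enorm, h_sq, mul_comm]

lemma eLpNorm_one_mul_eLpNorm_two_le_lintegral {f : G → E} {g : G → 𝕜}
    (hf : AEStronglyMeasurable f μ) (hg : MemLp g 2 μ) :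
    eLpNorm f 1 μ * eLpNorm g 2 μ ≤ ∫⁻ ω, eLpNorm (fun η ↦ g (η - ω) • f η) 2 μ ∂μ := by
  obtain hc | hc := eq_or_ne (eLpNorm g 2 μ) 0
  · simp [hc]
  rw [← ENNReal.mul_le_mul_iff_left hc hg.eLpNorm_ne_top,
    ← lintegral_mul_const' _ _ hg.eLpNorm_ne_top, mul_assoc, ← sq]
  calc eLpNorm f 1 μ * eLpNorm g 2 μ ^ 2
      = ∫⁻ ω, eLpNorm (fun η ↦ g (η - ω) • g (η - ω) • f η) 1 μ ∂μ :=
        (lintegral_eLpNorm_smul_smul_comp_sub hf hg.aestronglyMeasurable).symm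
    _ ≤ ∫⁻ ω, eLpNorm (fun η ↦ g (η - ω) • f η) 2 μ * eLpNorm g 2 μ ∂μ := by
        gcongr with ω
        have hgω := measurePreserving_sub_right μ ω
        rw [mul_comm, ← eLpNorm_comp_measurePreserving hg.aestronglyMeasurable hgω]
        have hgm := hg.aestronglyMeasurable.comp_measurePreserving hgω
        exact eLpNorm_smul_le_mul_eLpNorm (hgm.smul hf) hgm

end SlidingWindow

section FourierTransform

variable {V E : Type*} [NormedAddCommGroup E] [NormedSpace ℂ E]
  [NormedAddCommGroup V] [InnerProductSpace ℝ V] [FiniteDimensional ℝ V]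
  [MeasurableSpace V] [BorelSpace V]

lemma norm_le_integral_norm_fourier [CompleteSpace E] {f : V → E} (hf : Continuous f)
    (hf_int : Integrable f) (hf_fourier : Integrable (𝓕 f)) (x : V) :
    ‖f x‖ ≤ ∫ ξ, ‖𝓕 f ξ‖ := by
  calc ‖f x‖ = ‖𝓕⁻ (𝓕 f) x‖ := by rw [hf.fourierInv_fourier_eq hf_int hf_fourier]
    _ = ‖𝓕 (𝓕 f) (-x)‖ := by rw [fourierInv_eq_fourier_neg]
    _ ≤ ∫ ξ, ‖𝓕 f ξ‖ := VectorFourier.norm_fourierIntegral_le_integral_norm ..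

lemma fourier_fourierChar_smul_comp_sub (f : V → E) (x ω t : V) :
    𝓕 (fun η ↦ 𝐞 (inner ℝ x η) • f (η - ω)) t = 𝐞 (-inner ℝ ω (t - x)) • 𝓕 f (t - x) := by
  rw [fourier_eq, fourier_eq, Circle.smul_def, ← integral_smul, ← integral_add_right_eq_self _ ω]
  congr with η
  simp only [add_sub_cancel_right, ← Circle.smul_def, smul_smul, ← AddChar.map_add_eq_mul]
  congr 2
  simp only [inner_add_left, inner_add_right, inner_sub_right, real_inner_comm x]
  ring

end FourierTransform

section PartialFourier

variable {V W E : Type*} [NormedAddCommGroup E] [NormedSpace ℂ E]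
  [NormedAddCommGroup W] [InnerProductSpace ℝ W] [FiniteDimensional ℝ W]
  [MeasurableSpace W] [BorelSpace W]

/-- The Fourier transform of `f` in its second variable at the frequency `η`, as a function of the
first variable. The product carries the `L²` norm, so that it is again an inner product space. -/
noncomputable def partialFourier (f : WithLp 2 (V × W) → E) (η : W) (x : V) : E :=
  𝓕 (fun w ↦ f (WithLp.toLp 2 (x, w))) η

variable [NormedAddCommGroup V] [InnerProductSpace ℝ V] [FiniteDimensional ℝ V]
  [MeasurableSpace V] [BorelSpace V]

lemma integrable_partialFourier {f : WithLp 2 (V × W) → E} (hf : Integrable f) (η : W) :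
    Integrable (partialFourier f η) := by
  have h_toLp : Integrable (fun p : V × W ↦ f (WithLp.toLp 2 p)) :=
    (WithLp.volume_preserving_toLp V W).integrable_comp_of_integrable hf
  have h_inner : Continuous fun p : V × W ↦ -inner ℝ p.2 η := by fun_prop
  have h_smul : Integrable (fun p : V × W ↦ 𝐞 (-inner ℝ p.2 η) • f (WithLp.toLp 2 p))
      (volume.prod volume) :=
    h_toLp.mono
      ((continuous_fourierChar.comp h_inner).aestronglyMeasurable.smul h_toLp.aestronglyMeasurable)
      (.of_forall fun _ ↦ (Circle.norm_smul ..).le)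
  exact h_smul.integral_prod_left

lemma fourier_partialFourier {f : WithLp 2 (V × W) → E} (hf : Integrable f) (ξ : V) (η : W) :
    𝓕 (partialFourier f η) ξ = 𝓕 f (WithLp.toLp 2 (ξ, η)) := by
  have h_int : Integrable (fun p : V × W ↦
      𝐞 (-inner ℝ (WithLp.toLp 2 p) (WithLp.toLp 2 (ξ, η))) • f (WithLp.toLp 2 p))
      (volume.prod volume) :=
    (WithLp.volume_preserving_toLp V W).integrable_comp_of_integrable
      ((fourierIntegral_convergent_iff _).2 hf)
  calc 𝓕 (partialFourier f η) ξ
      = ∫ x, 𝐞 (-inner ℝ x ξ) • ∫ w, 𝐞 (-inner ℝ w η) • f (WithLp.toLp 2 (x, w)) := rfl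
    _ = ∫ x, ∫ w, 𝐞 (-inner ℝ (WithLp.toLp 2 (x, w)) (WithLp.toLp 2 (ξ, η))) •
          f (WithLp.toLp 2 (x, w)) := by
        simp only [WithLp.prod_inner_apply, neg_add, AddChar.map_add_eq_mul, Circle.smul_def,
          mul_smul, integral_smul]
    _ = 𝓕 f (WithLp.toLp 2 (ξ, η)) := by
        rw [← integral_prod _ h_int, fourier_eq,
          ← (WithLp.volume_preserving_toLp V W).integral_comp
            (MeasurableEquiv.toLp 2 _).measurableEmbedding]
        rfl

end PartialFourier

section Schwartz

variable {D E : Type*} [NormedAddCommGroup D] [NormedSpace ℝ D] [NormedAddCommGroup E]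

lemma hasTemperateGrowth_exp_comp {f : D → ℝ} (hf : f.HasTemperateGrowth) {c : ℝ}
    (hc : ∀ x, f x ≤ c) : (Real.exp ∘ f).HasTemperateGrowth := by
  have hdiff : UniqueDiffOn ℝ (Set.Iic c) := uniqueDiffOn_Iic c
  refine hf.comp' (t := Set.Iic c) (Set.range_subset_iff.2 hc) hdiff
    Real.contDiff_exp.contDiffOn fun N ↦ ⟨0, Real.exp c, (Real.exp_pos c).le, fun n _ y hy ↦ ?_⟩
  rw [norm_iteratedFDerivWithin_eq_norm_iteratedDerivWithin,
    iteratedDerivWithin_eq_iteratedDeriv hdiff Real.contDiff_exp.contDiffAt hy,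
    iteratedDeriv_eq_iterate, Real.iter_deriv_exp]
  simpa using hy

lemma exists_integrable_forall_norm_schwartz_le [NormedSpace ℝ E] {V : Type*}
    [NormedAddCommGroup V] [MeasurableSpace V] (μ : Measure V) [μ.HasTemperateGrowth]
    (f : 𝓢(D, E)) :
    ∃ Φ : V → ℝ, Integrable Φ μ ∧ ∀ z v, ‖v‖ ≤ ‖z‖ → ‖f z‖ ≤ Φ v := by
  set k := μ.integrablePower
  obtain ⟨C, hC⟩ : ∃ C, ∀ z, (1 + ‖z‖) ^ k * ‖f z‖ ≤ C := ⟨_, fun z ↦ by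
    simpa using one_add_le_sup_seminorm_apply (𝕜 := ℝ) (m := (k, 0)) le_rfl le_rfl f z⟩
  refine ⟨fun v ↦ C * (1 + ‖v‖) ^ (-(k : ℝ)),
    (Measure.integrable_pow_neg_integrablePower μ).const_mul C, fun z v hv ↦ ?_⟩
  have hv_pos : 0 < 1 + ‖v‖ := by positivity
  calc ‖f z‖ ≤ C / (1 + ‖v‖) ^ k := by
        rw [le_div_iff₀' (pow_pos hv_pos k)]
        exact le_trans (by gcongr) (hC z)
    _ = C * (1 + ‖v‖) ^ (-(k : ℝ)) := by
        rw [Real.rpow_neg hv_pos.le, Real.rpow_natCast, div_eq_mul_inv]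

variable {V W : Type*} [NormedAddCommGroup V] [NormedAddCommGroup W]

lemma integrable_schwartz_slice [NormedSpace ℝ E] [NormedSpace ℝ V] [NormedSpace ℝ W]
    [MeasurableSpace V] [OpensMeasurableSpace V] [SecondCountableTopology V]
    {μ : Measure V} [μ.HasTemperateGrowth] (f : 𝓢(WithLp 2 (V × W), E)) (w : W) :
    Integrable (fun v ↦ f (WithLp.toLp 2 (v, w))) μ := by
  obtain ⟨Φ, hΦ, hf⟩ := exists_integrable_forall_norm_schwartz_le μ f
  exact hΦ.mono' (by fun_prop)
    (.of_forall fun v ↦ hf _ _ (WithLp.norm_fst_le V (WithLp.toLp 2 (v, w))))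

variable [NormedSpace ℂ E] [InnerProductSpace ℝ W] [FiniteDimensional ℝ W]
  [MeasurableSpace W] [BorelSpace W]

lemma continuous_partialFourier [NormedSpace ℝ V] (f : 𝓢(WithLp 2 (V × W), E)) (η : W) :
    Continuous (partialFourier f η) := by
  obtain ⟨Φ, hΦ, hf⟩ := exists_integrable_forall_norm_schwartz_le (volume : Measure W) f
  have h_cont : Continuous fun p : V × W ↦ 𝐞 (-inner ℝ p.2 η) • f (WithLp.toLp 2 p) := by
    fun_prop
  refine continuous_of_dominated (bound := Φ)
    (fun x ↦ (h_cont.comp (.prodMk_right x)).aestronglyMeasurable)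
    (fun x ↦ .of_forall fun w ↦ ?_) hΦ (.of_forall fun w ↦ h_cont.comp (.prodMk_left w))
  exact (Circle.norm_smul _ _).trans_le (hf _ _ (WithLp.norm_snd_le V (WithLp.toLp 2 (x, w))))

variable [InnerProductSpace ℝ V] [FiniteDimensional ℝ V] [MeasurableSpace V] [BorelSpace V]

lemma norm_partialFourier_le [CompleteSpace E] (f : 𝓢(WithLp 2 (V × W), E)) (η : W) (x : V) :
    ‖partialFourier f η x‖ ≤ ∫ ξ, ‖𝓕 ⇑f (WithLp.toLp 2 (ξ, η))‖ := by
  have h_fourier : 𝓕 (partialFourier f η) = fun ξ ↦ 𝓕 ⇑f (WithLp.toLp 2 (ξ, η)) :=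
    funext fun ξ ↦ fourier_partialFourier f.integrable ξ η
  simpa only [h_fourier] using norm_le_integral_norm_fourier (continuous_partialFourier f η)
    (integrable_partialFourier f.integrable η)
    (h_fourier ▸ integrable_schwartz_slice (𝓕 f) η) x

lemma eLpNorm_two_fourier_s3 {H : Type*} [NormedAddCommGroup H] [InnerProductSpace ℂ H]
    [CompleteSpace H] (f : 𝓢(V, H)) :
    eLpNorm (𝓕 ⇑f) 2 volume = eLpNorm f 2 volume := by
  have h_norm := norm_fourier_toL2_eq f
  rw [SchwartzMap.norm_toLp, SchwartzMap.norm_toLp] at h_norm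
  rw [← fourier_coe]
  have h_top (g : 𝓢(V, H)) : eLpNorm g 2 volume ≠ ∞ :=
    (g.memLp 2 volume).eLpNorm_ne_top
  exact (ENNReal.toReal_eq_toReal_iff' (h_top _) (h_top _)).1 h_norm

end Schwartz

lemma coe_fourierChar (r : ℝ) : (𝐞 r : ℂ) = cexp (I * (2 * π * r)) := by
  rw [fourierChar_apply, mul_comm I]
  push_cast
  rfl

section Gaussian

variable {ι : Type*} [Fintype ι]

lemma gaussWin_eq_ofReal (t : EuclideanSpace ℝ ι) :
    gaussWin t = (Real.exp (-(π * ‖t‖ ^ 2)) : ℝ) := by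
  simp [gaussWin]

lemma conj_gaussWin (t : EuclideanSpace ℝ ι) : starRingEnd ℂ (gaussWin t) = gaussWin t := by
  rw [gaussWin_eq_ofReal, conj_ofReal]

lemma norm_gaussWin_le_one (t : EuclideanSpace ℝ ι) : ‖gaussWin t‖ ≤ 1 := by
  rw [gaussWin_eq_ofReal, Complex.norm_of_nonneg (Real.exp_nonneg _),
    Real.exp_le_one_iff, neg_nonpos]
  positivity

lemma continuous_gaussWin : Continuous (gaussWin (ι := ι)) := by
  unfold gaussWin
  fun_prop

lemma integrable_gaussWin : Integrable (gaussWin (ι := ι)) := by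
  have h := GaussianFourier.integrable_cexp_neg_mul_sq_norm_add (b := π)
    (by simpa using Real.pi_pos) 0 (0 : EuclideanSpace ℝ ι)
  simp only [neg_mul, zero_mul, add_zero] at h
  exact h

lemma fourier_gaussWin : 𝓕 (gaussWin (ι := ι)) = gaussWin := by
  have h_pi : (π : ℂ) ≠ 0 := ofReal_ne_zero.2 pi_ne_zero
  funext w
  have h := fourier_gaussian_innerProductSpace (V := EuclideanSpace ℝ ι) (b := π)
    (by simpa using Real.pi_pos) w
  simp only [div_self h_pi, one_cpow, one_mul] at h
  calc 𝓕 (gaussWin (ι := ι)) w = 𝓕 (fun v : EuclideanSpace ℝ ι ↦ cexp (-π * ‖v‖ ^ 2)) w := by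
        simp only [neg_mul]; rfl
    _ = cexp (-π ^ 2 * ‖w‖ ^ 2 / π) := h
    _ = gaussWin w := by rw [gaussWin]; field_simp

lemma memLp_gaussWin_two : MemLp (gaussWin (ι := ι)) 2 := by
  refine (memLp_two_iff_integrable_sq_norm continuous_gaussWin.aestronglyMeasurable).2 ?_
  refine integrable_gaussWin.norm.mono' (continuous_gaussWin.norm.pow 2).aestronglyMeasurable
    (.of_forall fun t ↦ ?_)
  rw [norm_pow, norm_norm]
  exact pow_le_of_le_one (norm_nonneg _) (norm_gaussWin_le_one t) two_ne_zero

lemma eLpNorm_gaussWin_two_ne_zero : eLpNorm (gaussWin (ι := ι)) 2 volume ≠ 0 := by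
  rw [Ne, eLpNorm_eq_zero_iff continuous_gaussWin.aestronglyMeasurable two_ne_zero,
    continuous_gaussWin.ae_eq_iff_eq volume continuous_zero]
  exact fun h ↦ Complex.exp_ne_zero _ (congrFun h 0)

lemma hasTemperateGrowth_gaussWin_sub (ω : EuclideanSpace ℝ ι) :
    (fun η ↦ gaussWin (η - ω)).HasTemperateGrowth := by
  have h_sub : (fun η ↦ η - ω).HasTemperateGrowth := by fun_prop
  have h_arg : (fun η ↦ -(π * ‖η - ω‖ ^ 2)).HasTemperateGrowth :=
    (Function.HasTemperateGrowth.const π |>.mul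
      ((Function.hasTemperateGrowth_norm_sq _).comp h_sub)).neg
  have h_exp := hasTemperateGrowth_exp_comp h_arg (c := 0) fun η ↦ by
    simpa using by positivity
  simp only [gaussWin_eq_ofReal]
  exact Function.Complex.hasTemperateGrowth_ofReal.comp h_exp

end Gaussian

section STFT

lemma lqNorm_enorm {α E : Type*} [MeasurableSpace α] [NormedAddCommGroup E]
    {μ : Measure α} {p : ℝ≥0∞} (hp : p ≠ 0) (f : α → E) :
    lqNorm μ p (fun x ↦ ‖f x‖ₑ) = eLpNorm f p μ := by
  rw [lqNorm, eLpNorm, if_neg hp]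
  rfl

variable {ι : Type*} [Fintype ι]

lemma STFT_eq_integral_fourierChar (f : EuclideanSpace ℝ ι → ℂ) (x ω : EuclideanSpace ℝ ι) :
    STFT f x ω = ∫ t, 𝐞 (-inner ℝ ω t) • (f t * gaussWin (t - x)) := by
  rw [STFT]
  congr with t
  rw [conj_gaussWin, Circle.smul_def, smul_eq_mul, coe_fourierChar, mul_comm]
  push_cast
  ring_nf

/-- The Fourier transform of `a` localized around the frequency `ω` by the Gaussian window; up to
a unimodular factor it is the Fourier transform of the slice `STFT a · ω`. -/
noncomputable def windowedFourier (a : 𝓢(EuclideanSpace ℝ ι, ℂ)) (ω : EuclideanSpace ℝ ι) :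
    𝓢(EuclideanSpace ℝ ι, ℂ) :=
  smulLeftCLM ℂ (fun η ↦ gaussWin (η - ω)) (𝓕 a)

lemma windowedFourier_apply (a : 𝓢(EuclideanSpace ℝ ι, ℂ)) (ω η : EuclideanSpace ℝ ι) :
    windowedFourier a ω η = gaussWin (η - ω) • 𝓕 ⇑a η :=
  smulLeftCLM_apply_apply (hasTemperateGrowth_gaussWin_sub ω) _ η

lemma fourierInv_windowedFourier (a : 𝓢(EuclideanSpace ℝ ι, ℂ)) (x ω : EuclideanSpace ℝ ι) :
    𝓕⁻ (windowedFourier a ω) x = 𝐞 (inner ℝ ω x) • STFT a x ω := by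
  have h_window : Integrable fun η ↦ 𝐞 (inner ℝ x η) • gaussWin (η - ω) := by
    have h_sub := (fourierIntegral_convergent_iff (-x)).2 (integrable_gaussWin.comp_sub_right ω)
    simpa only [inner_neg_right, neg_neg, real_inner_comm] using h_sub
  calc 𝓕⁻ (windowedFourier a ω) x
      = ∫ η, 𝓕 ⇑a η • 𝐞 (inner ℝ x η) • gaussWin (η - ω) := by
        rw [fourierInv_coe, fourierInv_eq]
        congr with η
        rw [windowedFourier_apply, real_inner_comm]
        simp only [Circle.smul_def, smul_eq_mul]
        ring
    _ = ∫ t, a t • 𝓕 (fun η ↦ 𝐞 (inner ℝ x η) • gaussWin (η - ω)) t := by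
        have h := VectorFourier.integral_fourierIntegral_smul_eq_flip
          (L := innerₗ (EuclideanSpace ℝ ι)) continuous_fourierChar continuous_inner
          (a.integrable (μ := volume)) h_window
        rwa [flip_innerₗ] at h
    _ = ∫ t, 𝐞 (inner ℝ ω x) • 𝐞 (-inner ℝ ω t) • (a t * gaussWin (t - x)) := by
        congr with t
        rw [fourier_fourierChar_smul_comp_sub, fourier_gaussWin, inner_sub_right, neg_sub,
          sub_eq_add_neg, AddChar.map_add_eq_mul, mul_smul]
        simp only [Circle.smul_def, smul_eq_mul]
        ring
    _ = 𝐞 (inner ℝ ω x) • STFT a x ω := by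
        simp only [Circle.smul_def, integral_smul, STFT_eq_integral_fourierChar]

lemma eLpNorm_STFT_two (a : 𝓢(EuclideanSpace ℝ ι, ℂ)) (ω : EuclideanSpace ℝ ι) :
    eLpNorm (fun x ↦ STFT a x ω) 2 volume = eLpNorm (windowedFourier a ω) 2 volume := by
  have h_norm (x) : ‖STFT a x ω‖ = ‖𝓕⁻ (windowedFourier a ω) x‖ := by
    rw [fourierInv_windowedFourier, Circle.norm_smul]
  rw [eLpNorm_congr_norm_ae (.of_forall h_norm), ← eLpNorm_two_fourier_s3,
    ← fourier_coe, FourierTransform.fourier_fourierInv_eq]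

lemma modNorm_one {p : ℝ≥0∞} (hp : p ≠ 0) (f : EuclideanSpace ℝ ι → ℂ) :
    modNorm p 1 f = ∫⁻ ω, eLpNorm (fun x ↦ STFT f x ω) p volume := by
  simp only [← lqNorm_enorm hp]
  simp [modNorm, lqNorm, enorm_eq_nnnorm]

lemma eLpNorm_fourier_one_mul_le_modNorm (a : 𝓢(EuclideanSpace ℝ ι, ℂ)) :
    eLpNorm (𝓕 ⇑a) 1 volume * eLpNorm (gaussWin (ι := ι)) 2 volume ≤
      modNorm 2 1 a := by
  calc eLpNorm (𝓕 ⇑a) 1 volume * eLpNorm (gaussWin (ι := ι)) 2 volume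
      ≤ ∫⁻ ω, eLpNorm (fun η ↦ gaussWin (η - ω) • 𝓕 ⇑a η) 2 volume :=
        eLpNorm_one_mul_eLpNorm_two_le_lintegral (𝓕 a).continuous.aestronglyMeasurable
          memLp_gaussWin_two
    _ = ∫⁻ ω, eLpNorm (windowedFourier a ω) 2 volume := by
        simp only [← windowedFourier_apply]
    _ = modNorm 2 1 a := by
        simp only [modNorm_one two_ne_zero, eLpNorm_STFT_two]

end STFT

section Pairing

variable {d : ℕ}

/-- The isometric identification of `ℝ^d × ℝ^d` with `ℝ^{2d}` underlying `pairE`. -/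
noncomputable def pairIsometry (d : ℕ) :
    WithLp 2 (EuclideanSpace ℝ (Fin d) × EuclideanSpace ℝ (Fin d)) ≃ₗᵢ[ℝ]
      EuclideanSpace ℝ (Fin d ⊕ Fin d) :=
  (PiLp.sumPiLpEquivProdLpPiLp 2 fun _ ↦ ℝ).symm

lemma pairIsometry_toLp (x ω : EuclideanSpace ℝ (Fin d)) :
    pairIsometry d (WithLp.toLp 2 (x, ω)) = pairE x ω := by
  ext (i | i) <;> rfl

/-- The symbol `a`, regarded as a function of its two variables separately. -/
noncomputable def pairedSymbol (a : 𝓢(EuclideanSpace ℝ (Fin d ⊕ Fin d), ℂ)) :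
    𝓢(WithLp 2 (EuclideanSpace ℝ (Fin d) × EuclideanSpace ℝ (Fin d)), ℂ) :=
  compCLMOfContinuousLinearEquiv ℂ (pairIsometry d).toContinuousLinearEquiv a

lemma pairedSymbol_apply (a : 𝓢(EuclideanSpace ℝ (Fin d ⊕ Fin d), ℂ))
    (x ω : EuclideanSpace ℝ (Fin d)) :
    pairedSymbol a (WithLp.toLp 2 (x, ω)) = a (pairE x ω) :=
  congrArg a (pairIsometry_toLp x ω)

lemma fourier_pairedSymbol (a : 𝓢(EuclideanSpace ℝ (Fin d ⊕ Fin d), ℂ)) :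
    𝓕 ⇑(pairedSymbol a) = 𝓕 ⇑a ∘ pairIsometry d :=
  funext (fourier_comp_linearIsometry (pairIsometry d) a)

lemma eLpNorm_fourier_pairedSymbol (a : 𝓢(EuclideanSpace ℝ (Fin d ⊕ Fin d), ℂ)) (p : ℝ≥0∞) :
    eLpNorm (𝓕 ⇑(pairedSymbol a)) p volume = eLpNorm (𝓕 ⇑a) p volume := by
  rw [fourier_pairedSymbol, ← fourier_coe]
  exact eLpNorm_comp_measurePreserving (𝓕 a).continuous.aestronglyMeasurable
    (pairIsometry d).measurePreserving

lemma partialFourier_pairedSymbol (a : 𝓢(EuclideanSpace ℝ (Fin d ⊕ Fin d), ℂ))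
    (x z : EuclideanSpace ℝ (Fin d)) :
    partialFourier (pairedSymbol a) (-z) x =
      ∫ ω, a (pairE x ω) * cexp (I * (2 * π * (inner ℝ z ω : ℝ))) := by
  rw [partialFourier, fourier_eq]
  congr with ω
  rw [pairedSymbol_apply, inner_neg_right, neg_neg, real_inner_comm, Circle.smul_def,
    smul_eq_mul, coe_fourierChar, mul_comm]

/-- The function `F` dominating the kernel of `a(x,D)`: the `L¹` norm of the slice of the Fourier
transform of `a` at second frequency `-z`. -/
noncomputable def kernelMajorant (a : 𝓢(EuclideanSpace ℝ (Fin d ⊕ Fin d), ℂ))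
    (z : EuclideanSpace ℝ (Fin d)) : ℝ :=
  ∫ ξ, ‖𝓕 ⇑(pairedSymbol a) (WithLp.toLp 2 (ξ, -z))‖

lemma kernelMajorant_nonneg (a : 𝓢(EuclideanSpace ℝ (Fin d ⊕ Fin d), ℂ))
    (z : EuclideanSpace ℝ (Fin d)) : 0 ≤ kernelMajorant a z :=
  integral_nonneg fun _ ↦ norm_nonneg _

lemma integrable_kernelMajorant (a : 𝓢(EuclideanSpace ℝ (Fin d ⊕ Fin d), ℂ)) :
    Integrable (kernelMajorant a) :=
  (integrable_integral_norm_toLp (𝓕 (pairedSymbol a)).integrable).comp_neg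

lemma eLpNorm_kernelMajorant_le (a : 𝓢(EuclideanSpace ℝ (Fin d ⊕ Fin d), ℂ)) :
    eLpNorm (kernelMajorant a) 1 volume ≤ eLpNorm (𝓕 ⇑a) 1 volume := by
  have h_int := integrable_integral_norm_toLp (𝓕 (pairedSymbol a)).integrable
  calc eLpNorm (kernelMajorant a) 1 volume
      = eLpNorm (fun η ↦ ∫ ξ, ‖𝓕 ⇑(pairedSymbol a) (WithLp.toLp 2 (ξ, η))‖) 1 volume :=
        eLpNorm_comp_measurePreserving h_int.aestronglyMeasurable
          (Measure.measurePreserving_neg volume)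
    _ ≤ eLpNorm (𝓕 ⇑(pairedSymbol a)) 1 volume :=
        eLpNorm_integral_norm_toLp_le (𝓕 (pairedSymbol a)).continuous.aestronglyMeasurable
    _ = eLpNorm (𝓕 ⇑a) 1 volume := eLpNorm_fourier_pairedSymbol a 1

lemma norm_integral_le_kernelMajorant (a : 𝓢(EuclideanSpace ℝ (Fin d ⊕ Fin d), ℂ))
    (x z : EuclideanSpace ℝ (Fin d)) :
    ‖∫ ω, a (pairE x ω) * cexp (I * (2 * π * (inner ℝ z ω : ℝ)))‖ ≤ kernelMajorant a z := by
  rw [← partialFourier_pairedSymbol]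
  exact norm_partialFourier_le (pairedSymbol a) (-z) x

end Pairing

/-- the kernel of `a(x,D)` with `a ∈ M^{2,1}` is dominated by
`F(x-y)` with `F ∈ L¹`, `‖F‖_{L¹} ≲ ‖a‖_{M^{2,1}}`. -/
theorem kn_kernel_dominated (d : ℕ) :
    ∃ C : ℝ, 0 < C ∧
      ∀ a : SchwartzMap (EuclideanSpace ℝ (Fin d ⊕ Fin d)) ℂ,
        ∃ F : EuclideanSpace ℝ (Fin d) → ℝ,
          (∀ x, 0 ≤ F x) ∧ Integrable F ∧
          eLpNorm F 1 volume ≤ ENNReal.ofReal C * modNorm 2 1 ⇑a ∧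
          ∀ x y : EuclideanSpace ℝ (Fin d),
            ‖∫ ω, a (pairE x ω) *
                Complex.exp (Complex.I * (2 * Real.pi * (inner ℝ (x - y) ω : ℝ)))‖ ≤
              F (x - y) := by
  let c := eLpNorm (gaussWin (ι := Fin d ⊕ Fin d)) 2 volume
  have hc_zero : c ≠ 0 := eLpNorm_gaussWin_two_ne_zero
  have hc_top : c ≠ ∞ := memLp_gaussWin_two.eLpNorm_ne_top
  have hc_inv : c⁻¹ ≠ ∞ := ENNReal.inv_ne_top.2 hc_zero
  refine ⟨c⁻¹.toReal, ENNReal.toReal_pos (ENNReal.inv_ne_zero.2 hc_top) hc_inv, fun a ↦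
    ⟨kernelMajorant a, kernelMajorant_nonneg a, integrable_kernelMajorant a, ?_,
      fun x y ↦ norm_integral_le_kernelMajorant a x (x - y)⟩⟩
  calc eLpNorm (kernelMajorant a) 1 volume
      ≤ eLpNorm (𝓕 ⇑a) 1 volume := eLpNorm_kernelMajorant_le a
    _ ≤ modNorm 2 1 a / c :=
        (ENNReal.le_div_iff_mul_le (.inl hc_zero) (.inl hc_top)).2
          (eLpNorm_fourier_one_mul_le_modNorm a)
    _ = ENNReal.ofReal c⁻¹.toReal * modNorm 2 1 a := by
        rw [ENNReal.ofReal_toReal hc_inv, mul_comm, div_eq_mul_inv]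
end
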